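/- Let r ≥ 4 and let H be an r-graph that is embeddable in a 2-reducible r-tree and has a cross-cut; let σ = σ(H) and β = 1/((r−2)(σ+1)+1). If σ ≥ 2, then there is a constant C > 0 (depending only on r and the number of vertices of H) such that for all n, ex(n,H) ≤ (σ−1)·binom(n,r−1) + C·n^{r−1−β}. If σ = 1, then there is a constant C > 0 (depending only on r and the number of vertices of H) such that for all n, ex(n,H) ≤ C·n^{r−2}. -/

import Mathlib

/-!
The proof uses the delta-system method. By `exists_homog`, every `r`-uniform family contains a
subfamily, with a constant fraction of its edges, that is `r`-partite and homogeneous: a single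
intersection-closed family `J` of colour sets describes both the intersections that occur and the
kernels that are rich, meaning that edges through the kernel can be chosen to avoid any given bounded
set elsewhere. In such a family a tree is embedded greedily, edge by edge, provided the colour set of
each intersection with the earlier edges lies in `J` (`Homog.embed`).

If two colours are free, in the sense that every colour set avoiding both lies in `J`, then a
`2`-reducible tree embeds, with two degree-one vertices of each edge on these colours. Hence, for a
family without a copy of `H`, either some `r - 2` colours determine the edge, which leaves at most
`n ^ (r - 2)` edges, or there is a centre colour `c` such that all proper colour sets through `c` lie
in `J` and those avoiding `c` have fewer than `r - 3` elements (`Homog.trichotomy`). If `σ = 1`, all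
edges of `H` share a vertex, and the second alternative yields a copy of `H` with that vertex on
colour `c`.

If `σ ≥ 2`, call a vertex heavy when its degree exceeds `n ^ ((r - 1) (1 - β / 2))`. There are few
heavy vertices, since there are `O(n ^ (r - 1))` edges in total. Only `O(n ^ (r - 2))` sets of size
`r - 1` lie in the links of `σ` given vertices, as otherwise the tree without a cross-cut of size `σ`
embeds in their common link (`exists_commonLink_bound`); so the edges meeting heavy vertices number
at most `(σ - 1) (n choose (r - 1))` up to an error term (`card_meeting_le`). For the edges without
heavy vertices, pass to a homogeneous subfamily with a centre colour: different centres have links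
with disjoint families of `(r - 3)`-subsets, and by Kruskal–Katona a link of size at most
`M ^ (r - 1)` is at most `O(M ^ 2)` times its double shadow (`Homog.card_le_of_star`). With
`M = n ^ (1 - β / 2)` this gives `O(n ^ (r - 1 - β))` edges.
-/

open Finset
open scoped Classical

noncomputable section

variable {α β : Type*}

/-- The vertex set of a hypergraph given by its finite edge set. -/
def hverts [DecidableEq α] (H : Finset (Finset α)) : Finset α := H.sup id

/-- `E 0, E 1, …, E (m-1)` is a tree-defining ordering: every edge after the first
has a parent among the earlier edges containing its intersection with the union of
all earlier edges. -/
def IsTreeOrder {m : ℕ} [DecidableEq α] (E : Fin m → Finset α) : Prop :=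
  ∀ i : Fin m, 0 < i.1 → ∃ j : Fin m, j < i ∧ E i ∩ (Finset.Iio i).sup E ⊆ E j

/-- A tight tree-defining ordering for an `r`-uniform hypergraph. -/
def IsTightTreeOrder {m : ℕ} [DecidableEq α] (r : ℕ) (E : Fin m → Finset α) : Prop :=
  ∀ i : Fin m, 0 < i.1 → ∃ j : Fin m, j < i ∧ E i ∩ (Finset.Iio i).sup E ⊆ E j ∧
    (E i ∩ E j).card = r - 1

/-- `H` is an `r`-tree: its edges admit a tree-defining ordering (with multiplicities
allowed in the ordering), and all edges have `r` vertices. -/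
def IsRTree [DecidableEq α] (r : ℕ) (H : Finset (Finset α)) : Prop :=
  ∃ (m : ℕ) (E : Fin m → Finset α),
    H = Finset.image E Finset.univ ∧ IsTreeOrder E ∧ ∀ i, (E i).card = r

/-- `H` is a tight `r`-tree. -/
def IsTightRTree [DecidableEq α] (r : ℕ) (H : Finset (Finset α)) : Prop :=
  ∃ (m : ℕ) (E : Fin m → Finset α),
    H = Finset.image E Finset.univ ∧ IsTightTreeOrder r E ∧ ∀ i, (E i).card = r

/-- The degree of a vertex: the number of edges containing it. -/
def hdeg [DecidableEq α] (H : Finset (Finset α)) (x : α) : ℕ :=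
  (H.filter (fun E => x ∈ E)).card

/-- `H` is `k`-reducible: every edge contains at least `k` vertices of degree 1. -/
def Reducible [DecidableEq α] (k : ℕ) (H : Finset (Finset α)) : Prop :=
  ∀ E ∈ H, k ≤ (E.filter (fun x => hdeg H x = 1)).card

/-- `S` is a cross-cut of `H`: it meets every edge in exactly one vertex. -/
def IsCrossCut [DecidableEq α] (H : Finset (Finset α)) (S : Finset α) : Prop :=
  ∀ E ∈ H, (E ∩ S).card = 1

/-- The cross-cut number: minimum size of a cross-cut. -/
def crossCutNum [DecidableEq α] (H : Finset (Finset α)) : ℕ :=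
  sInf {k | ∃ S : Finset α, IsCrossCut H S ∧ S.card = k}

/-- `S` is a vertex cover of `H`. -/
def IsVertexCover [DecidableEq α] (H : Finset (Finset α)) (S : Finset α) : Prop :=
  ∀ E ∈ H, (E ∩ S).Nonempty

/-- The vertex cover number: minimum size of a vertex cover. -/
def coverNum [DecidableEq α] (H : Finset (Finset α)) : ℕ :=
  sInf {k | ∃ S : Finset α, IsVertexCover H S ∧ S.card = k}

/-- `G` contains a copy of `H`, i.e. `H` is embeddable in `G`. -/
def ContainsCopy [DecidableEq α] [DecidableEq β] (G : Finset (Finset β))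
    (H : Finset (Finset α)) : Prop :=
  ∃ f : α → β, Set.InjOn f ↑(H.sup id) ∧ ∀ E ∈ H, E.image f ∈ G

/-- The Turán number `ex(n, H)`: the maximum size of an `r`-uniform family on `[n]`
containing no copy of `H`. -/
def exNum [DecidableEq α] (n r : ℕ) (H : Finset (Finset α)) : ℕ :=
  sSup {N | ∃ F : Finset (Finset (Fin n)), (∀ E ∈ F, E.card = r) ∧
    ¬ ContainsCopy F H ∧ F.card = N}

/-! ### Homogeneous subfamilies -/

/-- `B` is a rich kernel of `F`: every set `U` of at most `s` vertices is avoided, outside `B`,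
by some member of `F` containing `B`. This plays the role of being the kernel of a large
sunflower in `F`. -/
def Rich {V : Type*} [DecidableEq V] (s : ℕ) (F : Finset (Finset V)) (B : Finset V) : Prop :=
  ∀ U : Finset V, U.card ≤ s → ∃ E ∈ F, B ⊆ E ∧ Disjoint (E \ B) U

/-- The part of `E` whose colours lie in `K`. -/
def cpart {V : Type*} {r : ℕ} (χ : V → Fin r) (K : Finset (Fin r)) (E : Finset V) : Finset V :=
  E.filter (fun x => χ x ∈ K)

/-- `F` is an `r`-uniform family whose edges are rainbow in the `r`-colouring `χ`. -/
def Rainbow {V : Type*} (r : ℕ) (F : Finset (Finset V)) (χ : V → Fin r) : Prop :=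
  ∀ E ∈ F, E.card = r ∧ Set.InjOn χ (E : Set V)

/-- A homogeneous `r`-partite family with intersection structure `J`: the colour set of the
intersection of two distinct edges lies in `J`, and conversely the part of any edge coloured by a
member of `J` is a rich kernel. -/
structure Homog {V : Type*} [DecidableEq V] {r : ℕ} (s : ℕ) (F : Finset (Finset V))
    (χ : V → Fin r) (J : Finset (Finset (Fin r))) : Prop where
  rainbow : Rainbow r F χ
  inter : ∀ E ∈ F, ∀ E' ∈ F, E ≠ E' → (E ∩ E').image χ ∈ J
  rich : ∀ K ∈ J, ∀ E ∈ F, Rich s F (cpart χ K E)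
  univ_notMem : univ ∉ J

lemma Rich.mono {V : Type*} [DecidableEq V] {s : ℕ} {F G : Finset (Finset V)} {B : Finset V}
    (h : Rich s F B) (hFG : F ⊆ G) : Rich s G B := fun U hU => by
  obtain ⟨E, hE, h1⟩ := h U hU
  exact ⟨E, hFG hE, h1⟩

lemma Rainbow.mono {V : Type*} {r : ℕ} {F G : Finset (Finset V)} {χ : V → Fin r}
    (h : Rainbow r G χ) (hFG : F ⊆ G) : Rainbow r F χ := fun E hE => h E (hFG hE)

lemma Rainbow.image_eq {V : Type*} [DecidableEq V] {r : ℕ} {F : Finset (Finset V)}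
    {χ : V → Fin r} (h : Rainbow r F χ) {E : Finset V} (hE : E ∈ F) : E.image χ = univ := by
  rw [← Finset.card_eq_iff_eq_univ, Finset.card_image_of_injOn (h E hE).2, (h E hE).1,
    Fintype.card_fin]

lemma Rainbow.exists_color {V : Type*} [DecidableEq V] {r : ℕ} {F : Finset (Finset V)}
    {χ : V → Fin r} (h : Rainbow r F χ) {E : Finset V} (hE : E ∈ F) (c : Fin r) :
    ∃ x ∈ E, χ x = c := by
  have := h.image_eq hE ▸ Finset.mem_univ c
  simpa using this

lemma Rainbow.image_cpart {V : Type*} [DecidableEq V] {r : ℕ} {F : Finset (Finset V)}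
    {χ : V → Fin r} (h : Rainbow r F χ) {E : Finset V} (hE : E ∈ F) (K : Finset (Fin r)) :
    (cpart χ K E).image χ = K := by
  ext c
  simp only [cpart, mem_image, mem_filter]
  constructor
  · rintro ⟨x, ⟨_, h2⟩, rfl⟩; exact h2
  · intro hc
    obtain ⟨x, hx, rfl⟩ := h.exists_color hE c
    exact ⟨x, ⟨hx, hc⟩, rfl⟩

lemma Rainbow.card_cpart {V : Type*} [DecidableEq V] {r : ℕ} {F : Finset (Finset V)}
    {χ : V → Fin r} (h : Rainbow r F χ) {E : Finset V} (hE : E ∈ F) (K : Finset (Fin r)) :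
    (cpart χ K E).card = K.card := by
  conv_rhs => rw [← h.image_cpart hE K]
  rw [Finset.card_image_of_injOn]
  exact (h E hE).2.mono (Finset.coe_subset.2 (Finset.filter_subset _ _))

lemma cpart_subset {V : Type*} {r : ℕ} (χ : V → Fin r) (K : Finset (Fin r)) (E : Finset V) :
    cpart χ K E ⊆ E := Finset.filter_subset _ _

/-- A subset of a rainbow edge is the part of the edge carrying its colours. -/
lemma Rainbow.cpart_image {V : Type*} [DecidableEq V] {r : ℕ} {F : Finset (Finset V)}
    {χ : V → Fin r} (h : Rainbow r F χ) {E : Finset V} (hE : E ∈ F) {B : Finset V}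
    (hB : B ⊆ E) : cpart χ (B.image χ) E = B := by
  ext x
  simp only [cpart, mem_image, mem_filter]
  constructor
  · rintro ⟨hx, y, hy, hxy⟩
    rwa [← (h E hE).2 (hB hy) hx hxy]
  · intro hx
    exact ⟨hB hx, x, hx, rfl⟩

lemma Rainbow.cpart_eq_of_subset {V : Type*} [DecidableEq V] {r : ℕ} {F : Finset (Finset V)}
    {χ : V → Fin r} (h : Rainbow r F χ) {E E' : Finset V} (hE : E ∈ F) (hE' : E' ∈ F)
    {K : Finset (Fin r)} (hs : cpart χ K E ⊆ E') : cpart χ K E' = cpart χ K E := by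
  have := h.cpart_image hE' hs
  rwa [h.image_cpart hE] at this

/-- Successive deletion of edges whose `K`-part is not a rich kernel splits a family into a stable
part `G` and parts `D K` in which no `K`-part is a rich kernel. -/
lemma exists_cleaning {V : Type*} [DecidableEq V] {r s : ℕ} (χ : V → Fin r)
    (J : Finset (Finset (Fin r))) (F : Finset (Finset V)) (hF : Rainbow r F χ) :
    ∃ (G : Finset (Finset V)) (D : Finset (Fin r) → Finset (Finset V)),
      G ⊆ F ∧ (∀ K, D K ⊆ F) ∧ F ⊆ G ∪ J.biUnion D ∧
      (∀ K ∈ J, ∀ E ∈ G, Rich s G (cpart χ K E)) ∧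
      (∀ K, ∀ E ∈ D K, ¬ Rich s (D K) (cpart χ K E)) := by
  induction F using Finset.strongInduction with
  | H F ih =>
    by_cases hst : ∀ K ∈ J, ∀ E ∈ F, Rich s F (cpart χ K E)
    · exact ⟨F, fun _ => ∅, subset_rfl, by simp, by simp, hst, by simp⟩
    push Not at hst
    obtain ⟨K₀, hK₀, E₀, hE₀, hnr⟩ := hst
    set B := cpart χ K₀ E₀ with hB
    set R := F.filter (fun E => cpart χ K₀ E = B) with hR
    have hss : F \ R ⊂ F := by
      refine Finset.ssubset_iff_subset_ne.2 ⟨Finset.sdiff_subset, fun h => ?_⟩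
      have h' := Finset.ext_iff.1 h E₀
      simp [hR, hE₀, hB] at h'
    obtain ⟨G, D, hG, hD, hcov, hGs, hDn⟩ := ih (F \ R) hss (hF.mono Finset.sdiff_subset)
    refine ⟨G, fun K => if K = K₀ then D K ∪ R else D K, hG.trans Finset.sdiff_subset, ?_, ?_,
      hGs, ?_⟩
    · intro K
      dsimp only
      split_ifs
      · exact Finset.union_subset ((hD K).trans Finset.sdiff_subset) (Finset.filter_subset _ _)
      · exact (hD K).trans Finset.sdiff_subset
    · intro E hE
      by_cases hER : E ∈ R
      · refine Finset.mem_union_right _ (Finset.mem_biUnion.2 ⟨K₀, hK₀, ?_⟩)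
        simp [hER]
      · rcases Finset.mem_union.1 (hcov (Finset.mem_sdiff.2 ⟨hE, hER⟩)) with h | h
        · exact Finset.mem_union_left _ h
        · obtain ⟨K, hK, hEK⟩ := Finset.mem_biUnion.1 h
          refine Finset.mem_union_right _ (Finset.mem_biUnion.2 ⟨K, hK, ?_⟩)
          split_ifs
          · exact Finset.mem_union_left _ hEK
          · exact hEK
    · intro K E
      dsimp only
      split_ifs with hK
      · subst hK
        intro hE hrich
        have hsub : D K ∪ R ⊆ F := Finset.union_subset ((hD K).trans Finset.sdiff_subset)
          (Finset.filter_subset _ _)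
        by_cases hEB : cpart χ K E = B
        · rw [hEB] at hrich
          exact hnr (hrich.mono hsub)
        · have hED : E ∈ D K := by
            rcases Finset.mem_union.1 hE with h | h
            · exact h
            · exact absurd (Finset.mem_filter.1 h).2 hEB
          refine hDn K E hED fun U hU => ?_
          obtain ⟨E', hE', h1, h2⟩ := hrich U hU
          refine ⟨E', ?_, h1, h2⟩
          rcases Finset.mem_union.1 hE' with h | h
          · exact h
          · have := hF.cpart_eq_of_subset (hsub hE) (hsub hE') h1
            exact absurd (this ▸ (Finset.mem_filter.1 h).2) hEB
      · exact hDn K E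

/-- If no `K`-part of an edge of `D` is a rich kernel, a positive proportion of `D` has no two
edges meeting exactly in their `K`-parts: all edges through a given `K`-part are made to share one
more vertex. -/
lemma exists_avoid_type {V : Type*} [DecidableEq V] {r s : ℕ} (χ : V → Fin r)
    (K : Finset (Fin r)) (D : Finset (Finset V)) (hD : Rainbow r D χ)
    (hn : ∀ E ∈ D, ¬ Rich s D (cpart χ K E)) :
    ∃ F ⊆ D, D.card ≤ s * F.card ∧
      ∀ E ∈ F, ∀ E' ∈ F, (E ∩ E').image χ ≠ K := by
  have key : ∀ B ∈ D.image (cpart χ K), ∃ u, u ∉ B ∧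
      (D.filter (fun E => cpart χ K E = B)).card ≤
        s * (D.filter (fun E => cpart χ K E = B ∧ u ∈ E)).card := by
    intro B hB
    obtain ⟨E₀, hE₀, rfl⟩ := Finset.mem_image.1 hB
    have h := hn E₀ hE₀
    unfold Rich at h
    push Not at h
    obtain ⟨U, hU, hcov⟩ := h
    set B := cpart χ K E₀ with hBdef
    have hsub : D.filter (fun E => cpart χ K E = B) ⊆
        (U \ B).biUnion (fun u => D.filter (fun E => cpart χ K E = B ∧ u ∈ E)) := by
      intro E hE
      obtain ⟨hED, hEB⟩ := Finset.mem_filter.1 hE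
      have := hcov E hED (hEB ▸ cpart_subset χ K E)
      rw [Finset.not_disjoint_iff] at this
      obtain ⟨u, hu, huU⟩ := this
      rw [Finset.mem_sdiff] at hu
      exact Finset.mem_biUnion.2 ⟨u, Finset.mem_sdiff.2 ⟨huU, hu.2⟩,
        Finset.mem_filter.2 ⟨hED, hEB, hu.1⟩⟩
    have hne : (U \ B).Nonempty := by
      have : E₀ ∈ D.filter (fun E => cpart χ K E = B) := by simp [hE₀, hBdef]
      obtain ⟨u, hu, -⟩ := Finset.mem_biUnion.1 (hsub this)
      exact ⟨u, hu⟩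
    obtain ⟨u, hu, hmax⟩ := Finset.exists_max_image (U \ B)
      (fun u => (D.filter (fun E => cpart χ K E = B ∧ u ∈ E)).card) hne
    refine ⟨u, (Finset.mem_sdiff.1 hu).2, ?_⟩
    calc _ ≤ _ := Finset.card_le_card hsub
      _ ≤ (U \ B).card * (D.filter (fun E => cpart χ K E = B ∧ u ∈ E)).card :=
        Finset.card_biUnion_le_card_mul _ _ _ hmax
      _ ≤ _ := Nat.mul_le_mul_right _ ((Finset.card_le_card Finset.sdiff_subset).trans hU)
  rcases D.eq_empty_or_nonempty with rfl | ⟨E₁, hE₁⟩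
  · exact ⟨∅, subset_rfl, by simp, by simp⟩
  have : Nonempty V := ⟨(key _ (Finset.mem_image_of_mem _ hE₁)).choose⟩
  choose! u hu1 hu2 using key
  refine ⟨D.filter (fun E => u (cpart χ K E) ∈ E), Finset.filter_subset _ _, ?_, ?_⟩
  · rw [Finset.card_eq_sum_card_image (cpart χ K) D,
      Finset.card_eq_sum_card_fiberwise (f := cpart χ K) (t := D.image (cpart χ K)), Finset.mul_sum]
    · refine Finset.sum_le_sum fun B hB => (hu2 B hB).trans (Nat.mul_le_mul_left _ ?_)
      refine Finset.card_le_card fun E hE => ?_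
      simp only [Finset.mem_filter] at hE ⊢
      refine ⟨⟨hE.1, ?_⟩, hE.2.1⟩
      rw [hE.2.1]; exact hE.2.2
    · intro E hE
      exact Finset.mem_coe.2 (Finset.mem_image_of_mem _ (Finset.mem_filter.1 hE).1)
  · intro E hE E' hE' hK
    obtain ⟨hED, hEu⟩ := Finset.mem_filter.1 hE
    obtain ⟨hED', hEu'⟩ := Finset.mem_filter.1 hE'
    have e1 := hD.cpart_image hED (Finset.inter_subset_left (s₁ := E) (s₂ := E'))
    have e2 := hD.cpart_image hED' (Finset.inter_subset_right (s₁ := E) (s₂ := E'))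
    rw [hK] at e1 e2
    rw [e1] at hEu
    rw [e2] at hEu'
    have := hu1 _ (Finset.mem_image_of_mem (cpart χ K) hED)
    rw [e1] at this
    exact this (Finset.mem_inter.2 ⟨hEu, hEu'⟩)

/-- The homogeneous subfamily theorem for families that are already `r`-partite, by induction on
the number of admissible intersection types. -/
lemma exists_homog_aux {V : Type*} [DecidableEq V] {r s : ℕ} (hs : 1 ≤ s) (χ : V → Fin r) :
    ∀ (j : ℕ) (J : Finset (Finset (Fin r))), J.card = j → univ ∉ J →
      ∀ F : Finset (Finset V), Rainbow r F χ →
        (∀ E ∈ F, ∀ E' ∈ F, E ≠ E' → (E ∩ E').image χ ∈ J) →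
        ∃ F' ⊆ F, ∃ J', F.card ≤ 2 * (2 * 2 ^ 2 ^ r * s) ^ j * F'.card ∧ Homog s F' χ J' := by
  intro j
  induction j with
  | zero =>
    intro J hJ hu F hF hcap
    rw [Finset.card_eq_zero] at hJ
    subst hJ
    exact ⟨F, subset_rfl, ∅, by simp; omega, hF, hcap, by simp, by simp⟩
  | succ j ih =>
    intro J hJ hu F hF hcap
    obtain ⟨G, D, hG, hD, hcov, hGs, hDn⟩ := exists_cleaning (s := s) χ J F hF
    have hpow : 1 ≤ (2 * 2 ^ 2 ^ r * s) ^ (j + 1) :=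
      Nat.one_le_pow _ _ (by positivity)
    by_cases hbig : F.card ≤ 2 * G.card
    · refine ⟨G, hG, J, ?_, hF.mono hG, fun E hE E' hE' => hcap E (hG hE) E' (hG hE'), hGs, hu⟩
      nlinarith
    push Not at hbig
    have hsum : F.card ≤ G.card + (J.biUnion D).card :=
      (Finset.card_le_card hcov).trans (Finset.card_union_le _ _)
    have hJne : J.Nonempty := Finset.card_pos.1 (by omega)
    obtain ⟨K, hK, hmax⟩ := Finset.exists_max_image J (fun K => (D K).card) hJne
    have h1 : (J.biUnion D).card ≤ J.card * (D K).card :=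
      Finset.card_biUnion_le_card_mul _ _ _ hmax
    have hJc : J.card ≤ 2 ^ 2 ^ r := by
      have := Finset.card_le_univ J
      have e : Fintype.card (Finset (Fin r)) = 2 ^ r := by simp
      rw [e] at this
      exact this.trans (Nat.lt_two_pow_self).le
    have h2 : F.card ≤ 2 * 2 ^ 2 ^ r * (D K).card := by
      have := Nat.mul_le_mul_right (D K).card hJc
      nlinarith
    obtain ⟨F₁, hF₁, hc₁, hav⟩ := exists_avoid_type χ K (D K) (hF.mono (hD K)) (hDn K)
    obtain ⟨F', hF', J', hc', hH⟩ := ih (J.erase K)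
      (by rw [Finset.card_erase_of_mem hK, hJ]; rfl) (fun h => hu (Finset.mem_of_mem_erase h)) F₁
      (hF.mono (hF₁.trans (hD K)))
      (fun E hE E' hE' hne => Finset.mem_erase.2 ⟨hav E hE E' hE',
        hcap E (hD K (hF₁ hE)) E' (hD K (hF₁ hE')) hne⟩)
    refine ⟨F', hF'.trans (hF₁.trans (hD K)), J', ?_, hH⟩
    calc F.card ≤ 2 * 2 ^ 2 ^ r * (D K).card := h2
      _ ≤ 2 * 2 ^ 2 ^ r * (s * (2 * (2 * 2 ^ 2 ^ r * s) ^ j * F'.card)) := by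
        gcongr
        exact hc₁.trans (Nat.mul_le_mul_left _ hc')
      _ = _ := by ring

/-- Some `r`-colouring makes a proportion at least `r ^ (-r)` of an `r`-uniform family rainbow. -/
lemma exists_coloring {n r : ℕ} (F : Finset (Finset (Fin n))) (hF : ∀ E ∈ F, E.card = r)
    (hr : 1 ≤ r) :
    ∃ χ : Fin n → Fin r, F.card ≤ r ^ r *
      (F.filter (fun E : Finset (Fin n) => Set.InjOn χ (E : Set (Fin n)))).card := by
  have hE : ∀ E ∈ F, r ^ n ≤ r ^ r *
      (univ.filter (fun χ : Fin n → Fin r => Set.InjOn χ (E : Set (Fin n)))).card := by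
    intro E hE
    have e : E ≃ Fin r := Finset.equivFinOfCardEq (hF E hE)
    let mk : (Fin n → Fin r) → (Fin n → Fin r) :=
      fun χ x => if h : x ∈ E then e ⟨x, h⟩ else χ x
    have hinj : Set.InjOn (fun χ : Fin n → Fin r => ((fun x : E => χ x.1), mk χ))
        ((univ : Finset (Fin n → Fin r)) : Set (Fin n → Fin r)) := by
      intro χ _ χ' _ h
      simp only [Prod.mk.injEq] at h
      funext x
      by_cases hx : x ∈ E
      · exact congrFun h.1 ⟨x, hx⟩
      · have := congrFun h.2 x
        simpa [mk, hx] using this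
    have hle := Finset.card_le_card_of_injOn (t := (univ : Finset (E → Fin r)) ×ˢ
      (univ.filter (fun χ : Fin n → Fin r => Set.InjOn χ (E : Set (Fin n))))) _ (by
        intro χ _
        simp only [Finset.coe_product, Set.mem_prod, Finset.coe_univ, Set.mem_univ, true_and,
          Finset.coe_filter, Finset.mem_univ, Set.mem_ofPred_eq]
        intro x hx y hy hxy
        have hx' : x ∈ E := hx
        have hy' : y ∈ E := hy
        simp only [mk, hx', hy', dif_pos] at hxy
        simpa using e.injective hxy) hinj
    rw [Finset.card_product] at hle
    simpa [hF E hE] using hle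
  by_contra hcon
  push Not at hcon
  have hr' : 0 < r := hr
  have : Nonempty (Fin r) := ⟨⟨0, hr'⟩⟩
  have h1 : ∑ χ : Fin n → Fin r, r ^ r *
      (F.filter (fun E : Finset (Fin n) => Set.InjOn χ (E : Set (Fin n)))).card <
      ∑ _χ : Fin n → Fin r, F.card :=
    Finset.sum_lt_sum_of_nonempty Finset.univ_nonempty fun χ _ => hcon χ
  have hdc := Finset.sum_card_bipartiteAbove_eq_sum_card_bipartiteBelow
    (s := (univ : Finset (Fin n → Fin r))) (t := F)
    (fun (χ : Fin n → Fin r) (E : Finset (Fin n)) => Set.InjOn χ (E : Set (Fin n)))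
  simp only [Finset.bipartiteAbove, Finset.bipartiteBelow] at hdc
  rw [← Finset.mul_sum, hdc, Finset.mul_sum] at h1
  have h2 := Finset.sum_le_sum hE
  simp only [Finset.sum_const, smul_eq_mul, Finset.card_univ, Fintype.card_fun,
    Fintype.card_fin] at h1 h2
  rw [mul_comm] at h1
  exact absurd (h2.trans_lt h1) (lt_irrefl _)

/-- The homogeneous subfamily theorem: every `r`-uniform family has a homogeneous subfamily
containing a positive proportion (depending on `r` and `s` only) of its edges. -/
theorem exists_homog (r s : ℕ) (hr : 1 ≤ r) (hs : 1 ≤ s) :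
    ∃ C : ℕ, 1 ≤ C ∧ ∀ (n : ℕ) (F : Finset (Finset (Fin n))), (∀ E ∈ F, E.card = r) →
      ∃ F' ⊆ F, ∃ (χ : Fin n → Fin r) (J : Finset (Finset (Fin r))),
        F.card ≤ C * F'.card ∧ Homog s F' χ J := by
  refine ⟨r ^ r * (2 * (2 * 2 ^ 2 ^ r * s) ^ (univ.erase (univ : Finset (Fin r))).card),
    Nat.succ_le_of_lt (by positivity), fun n F hF => ?_⟩
  obtain ⟨χ, hχ⟩ := exists_coloring F hF hr
  set F₀ := F.filter (fun E : Finset (Fin n) => Set.InjOn χ (E : Set (Fin n))) with hF₀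
  have hR : Rainbow r F₀ χ := fun E hE =>
    ⟨hF E (Finset.mem_filter.1 hE).1, (Finset.mem_filter.1 hE).2⟩
  obtain ⟨F', hF', J, hc, hH⟩ := exists_homog_aux hs χ _ (univ.erase (univ : Finset (Fin r))) rfl
    (by simp) F₀ hR (by
      intro E hE E' hE' hne
      refine Finset.mem_erase.2 ⟨fun h => hne ?_, Finset.mem_univ _⟩
      have h1 : r ≤ (E ∩ E').card := by
        have := Finset.card_image_le (s := E ∩ E') (f := χ)
        rwa [h, Finset.card_univ, Fintype.card_fin] at this
      have e1 := Finset.eq_of_subset_of_card_le (Finset.inter_subset_left (s₁ := E) (s₂ := E'))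
        ((hR E hE).1 ▸ h1)
      have e2 := Finset.eq_of_subset_of_card_le (Finset.inter_subset_right (s₁ := E) (s₂ := E'))
        ((hR E' hE').1 ▸ h1)
      exact e1.symm.trans e2)
  refine ⟨F', hF'.trans (Finset.filter_subset _ _), χ, J, ?_, hH⟩
  calc F.card ≤ r ^ r * F₀.card := hχ
    _ ≤ _ := by rw [mul_assoc]; exact Nat.mul_le_mul_left _ hc

/-! ### The intersection structure of a homogeneous family -/

section Structure

variable {V : Type*} [DecidableEq V] {r s : ℕ} {F : Finset (Finset V)} {χ : V → Fin r}
  {J : Finset (Finset (Fin r))}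

/-- The intersection structure is closed under intersection: extend two kernels of one edge to
further edges that are otherwise disjoint. -/
lemma Homog.inter_mem (h : Homog s F χ J) (hs : 2 * r ≤ s) (hne : F.Nonempty)
    {K L : Finset (Fin r)} (hK : K ∈ J) (hL : L ∈ J) : K ∩ L ∈ J := by
  obtain ⟨E, hE⟩ := hne
  have hEc := (h.rainbow E hE).1
  obtain ⟨E₁, hE₁, hs₁, hd₁⟩ := h.rich K hK E hE E (by omega)
  have hE₁c := (h.rainbow E₁ hE₁).1
  obtain ⟨E₂, hE₂, hs₂, hd₂⟩ := h.rich L hL E hE (E ∪ E₁)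
    ((Finset.card_union_le _ _).trans (by omega))
  have hcap : E₁ ∩ E₂ = cpart χ (K ∩ L) E := by
    ext x
    simp only [cpart, Finset.mem_inter, Finset.mem_filter]
    rw [Finset.disjoint_left] at hd₁ hd₂
    constructor
    · rintro ⟨h1, h2⟩
      have hxL : x ∈ cpart χ L E := by
        by_contra hx
        exact hd₂ (Finset.mem_sdiff.2 ⟨h2, hx⟩) (Finset.mem_union_right _ h1)
      have hxK : x ∈ cpart χ K E := by
        by_contra hx
        exact hd₁ (Finset.mem_sdiff.2 ⟨h1, hx⟩) (cpart_subset _ _ _ hxL)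
      exact ⟨cpart_subset _ _ _ hxL, (Finset.mem_filter.1 hxK).2, (Finset.mem_filter.1 hxL).2⟩
    · rintro ⟨h1, h2, h3⟩
      exact ⟨hs₁ (Finset.mem_filter.2 ⟨h1, h2⟩), hs₂ (Finset.mem_filter.2 ⟨h1, h3⟩)⟩
  have hi := h.rainbow.image_cpart hE (K ∩ L)
  rw [← hi, ← hcap]
  refine h.inter E₁ hE₁ E₂ hE₂ fun heq => ?_
  -- equality of the two edges would force `K ∩ L` to be everything
  rw [← heq, Finset.inter_self] at hcap
  rw [← hcap, h.rainbow.image_eq hE₁] at hi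
  have : K = univ := Finset.eq_univ_of_forall fun c =>
    (Finset.mem_inter.1 (hi ▸ Finset.mem_univ c)).1
  exact h.univ_notMem (this ▸ hK)

/-- A proper colour set lies in an intersection-closed `J` as soon as it can be separated from each
outside colour by a member of `J`. -/
lemma Homog.mem_of_separated (h : Homog s F χ J) (hs : 2 * r ≤ s) (hne : F.Nonempty)
    {K : Finset (Fin r)} (hK : K ≠ univ) (hsep : ∀ d ∉ K, ∃ X ∈ J, K ⊆ X ∧ d ∉ X) : K ∈ J := by
  obtain ⟨d, hd⟩ : ∃ d, d ∉ K := by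
    by_contra hcon
    push Not at hcon
    exact hK (Finset.eq_univ_of_forall hcon)
  obtain ⟨X₀, hX₀, hKX₀, -⟩ := hsep d hd
  obtain ⟨X, hX, hmin⟩ := Finset.exists_min_image (J.filter (fun X => K ⊆ X)) Finset.card
    ⟨X₀, Finset.mem_filter.2 ⟨hX₀, hKX₀⟩⟩
  obtain ⟨hXJ, hKX⟩ := Finset.mem_filter.1 hX
  by_cases hXK : X ⊆ K
  · rwa [Finset.Subset.antisymm hKX hXK]
  obtain ⟨e, heX, heK⟩ := Finset.not_subset.1 hXK
  obtain ⟨Y, hY, hKY, heY⟩ := hsep e heK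
  have := hmin (X ∩ Y) (Finset.mem_filter.2 ⟨h.inter_mem hs hne hXJ hY,
    Finset.subset_inter hKX hKY⟩)
  have hlt : (X ∩ Y).card < X.card := Finset.card_lt_card
    ((Finset.ssubset_iff_of_subset Finset.inter_subset_left).2
      ⟨e, heX, fun he => heY (Finset.mem_inter.1 he).2⟩)
  omega

/-- If no member of `J` contains `K`, the `K`-part determines the edge. -/
lemma Homog.card_le_of_uncovered {n : ℕ} {F : Finset (Finset (Fin n))} {χ : Fin n → Fin r}
    (h : Homog s F χ J) (K : Finset (Fin r)) (hK : ∀ L ∈ J, ¬ K ⊆ L) :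
    F.card ≤ n ^ K.card := by
  have : F.card ≤ (powersetCard K.card (univ : Finset (Fin n))).card := by
    refine Finset.card_le_card_of_injOn (cpart χ K) (fun E hE => ?_) ?_
    · simp [Finset.mem_powersetCard, h.rainbow.card_cpart hE]
    · intro E hE E' hE' heq
      by_contra hne
      refine hK _ (h.inter E hE E' hE' hne) ?_
      have heq : cpart χ K E = cpart χ K E' := heq
      have h1 : cpart χ K E ⊆ E ∩ E' :=
        Finset.subset_inter (cpart_subset _ _ _) (heq ▸ cpart_subset _ _ _)
      have := Finset.image_subset_image (f := χ) h1
      rwa [h.rainbow.image_cpart hE] at this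
  refine this.trans ?_
  rw [Finset.card_powersetCard, Finset.card_univ, Fintype.card_fin]
  exact Nat.choose_le_pow n K.card

/-- Trichotomy for homogeneous families: either two colours `a, b` are free in the sense that all
colour sets avoiding them are in `J`, or the family has at most `n ^ (r - 2)` edges, or the family
is star-like with centre colour `c`: all proper colour sets through `c` are in `J`, while the
members of `J` avoiding `c` have fewer than `r - 3` elements. -/
lemma Homog.trichotomy {n : ℕ} {F : Finset (Finset (Fin n))} {χ : Fin n → Fin r}
    (h : Homog s F χ J) (hs : 2 * r ≤ s) (hne : F.Nonempty) (hr : 4 ≤ r)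
    (hfree : ∀ a b : Fin r, a ≠ b → ∃ K, a ∉ K ∧ b ∉ K ∧ K ∉ J) :
    F.card ≤ n ^ (r - 2) ∨ ∃ c : Fin r,
      (∀ K : Finset (Fin r), K ≠ univ → c ∈ K → K ∈ J) ∧
      (∀ K ∈ J, c ∉ K → K.card + 3 < r) := by
  by_cases hunc : ∃ a b : Fin r, a ≠ b ∧ ∀ L ∈ J, ¬ (univ.erase a).erase b ⊆ L
  · left
    obtain ⟨a, b, hab, hL⟩ := hunc
    have := h.card_le_of_uncovered _ hL
    rwa [Finset.card_erase_of_mem (by simp [hab.symm]), Finset.card_erase_of_mem (by simp),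
      Finset.card_univ, Fintype.card_fin, Nat.sub_sub] at this
  right
  push Not at hunc
  -- two colours whose complements are not in `J` would be free
  have hone : ∀ a b : Fin r, a ≠ b → univ.erase a ∈ J ∨ univ.erase b ∈ J := by
    intro a b hab
    by_contra hcon
    push Not at hcon
    have hpair : ∀ a b : Fin r, a ≠ b → univ.erase a ∉ J → univ.erase b ∉ J →
        (univ.erase a).erase b ∈ J := by
      intro a b hab ha hb
      obtain ⟨L, hL, hsub⟩ := hunc a b hab
      have haL : a ∉ L := fun haL => by
        by_cases hbL : b ∈ L
        · refine h.univ_notMem ?_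
          convert hL
          refine (Finset.eq_univ_of_forall fun x => ?_).symm
          by_cases hxa : x = a
          · exact hxa ▸ haL
          by_cases hxb : x = b
          · exact hxb ▸ hbL
          exact hsub (by simp [hxa, hxb])
        · refine hb ?_
          convert hL
          ext x
          by_cases hxb : x = b
          · simp [hxb, hbL]
          by_cases hxa : x = a
          · simp [hxa, haL, hab]
          simp [hxb, hsub (show x ∈ (univ.erase a).erase b by simp [hxa, hxb])]
      have hbL : b ∉ L := fun hbL => by
        refine ha ?_
        convert hL
        ext x
        by_cases hxa : x = a
        · simp [hxa, haL]
        by_cases hxb : x = b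
        · simp [hxb, hbL, hab.symm]
        simp [hxa, hsub (show x ∈ (univ.erase a).erase b by simp [hxa, hxb])]
      convert hL
      ext x
      by_cases hxa : x = a
      · simp [hxa, haL]
      by_cases hxb : x = b
      · simp [hxb, hbL]
      simp [hxa, hxb, hsub (show x ∈ (univ.erase a).erase b by simp [hxa, hxb])]
    obtain ⟨K, haK, hbK, hKJ⟩ := hfree a b hab
    refine hKJ (h.mem_of_separated hs hne (fun hK => haK (hK ▸ Finset.mem_univ a)) ?_)
    intro d hd
    by_cases hdM : univ.erase d ∈ J
    · exact ⟨_, hdM, fun x hx => by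
        simp only [Finset.mem_erase, Finset.mem_univ, and_true]
        rintro rfl; exact hd hx, by simp⟩
    by_cases hda : d = a
    · subst hda
      refine ⟨_, hpair d b hab hcon.1 hcon.2, fun x hx => ?_, by simp⟩
      simp only [Finset.mem_erase, Finset.mem_univ, and_true]
      exact ⟨fun e => hbK (e ▸ hx), fun e => hd (e ▸ hx)⟩
    · refine ⟨_, hpair d a hda hdM hcon.1, fun x hx => ?_, by simp⟩
      simp only [Finset.mem_erase, Finset.mem_univ, and_true]
      exact ⟨fun e => haK (e ▸ hx), fun e => hd (e ▸ hx)⟩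
  have hsepM : ∀ K : Finset (Fin r), K ≠ univ → (∀ d ∉ K, univ.erase d ∈ J) → K ∈ J := by
    intro K hK hd
    refine h.mem_of_separated hs hne hK fun d hdK => ⟨_, hd d hdK, fun x hx => ?_, by simp⟩
    simp only [Finset.mem_erase, Finset.mem_univ, and_true]
    rintro rfl; exact hdK hx
  have hc : ∃ c : Fin r, univ.erase c ∉ J := by
    by_contra hcon
    push Not at hcon
    obtain ⟨K, haK, hbK, hKJ⟩ := hfree ⟨0, by omega⟩ ⟨1, by omega⟩ (by simp)
    exact hKJ (hsepM K (fun hK => haK (hK ▸ Finset.mem_univ _)) fun d _ => hcon d)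
  obtain ⟨c, hc⟩ := hc
  have hstar : ∀ K : Finset (Fin r), K ≠ univ → c ∈ K → K ∈ J := by
    intro K hK hcK
    refine hsepM K hK fun d hd => ?_
    exact (hone d c (fun e => hd (e ▸ hcK))).resolve_right hc
  refine ⟨c, hstar, fun K hK hcK => ?_⟩
  by_contra hcard
  push Not at hcard
  -- the colours missing from `K` are among `c` and two further colours `a, b`, which are free
  obtain ⟨P, hP1, hP2, hP3⟩ := Finset.exists_subsuperset_card_eq
    (s := Kᶜ.erase c) (t := univ.erase c) (n := 2)
    (Finset.erase_subset_erase _ (Finset.subset_univ _))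
    (by
      rw [Finset.card_erase_of_mem (by simp [hcK]), Finset.card_compl, Fintype.card_fin]
      omega)
    (by
      rw [Finset.card_erase_of_mem (by simp), Finset.card_univ, Fintype.card_fin]
      omega)
  obtain ⟨a, b, hab, rfl⟩ := Finset.card_eq_two.1 hP3
  obtain ⟨L, haL, hbL, hLJ⟩ := hfree a b hab
  refine hLJ ?_
  have hLu : L ≠ univ := fun e => haL (e ▸ Finset.mem_univ a)
  by_cases hcL : c ∈ L
  · exact hstar L hLu hcL
  have hac : a ≠ c := (Finset.mem_erase.1 (hP2 (by simp : a ∈ ({a, b} : Finset (Fin r))))).1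
  have hL' : insert c L ∈ J := hstar _ (fun e => by
    have : a ∈ insert c L := e ▸ Finset.mem_univ a
    simp [hac, haL] at this) (by simp)
  have := h.inter_mem hs hne hK hL'
  convert this
  ext x
  simp only [Finset.mem_inter, Finset.mem_insert]
  constructor
  · intro hx
    refine ⟨?_, Or.inr hx⟩
    by_contra hxK
    have hxc : x ≠ c := fun e => hcL (e ▸ hx)
    have : x ∈ ({a, b} : Finset (Fin r)) := hP1 (by simp [hxK, hxc])
    simp only [Finset.mem_insert, Finset.mem_singleton] at this
    rcases this with rfl | rfl
    · exact haL hx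
    · exact hbL hx
  · rintro ⟨hx, rfl | hx'⟩
    · exact absurd hx hcK
    · exact hx'

end Structure

/-! ### Embedding trees -/

/-- The union of the terms of `E` before index `i`. -/
def prev {γ : Type*} [DecidableEq γ] (E : ℕ → Finset γ) (i : ℕ) : Finset γ :=
  (range i).biUnion E

/-- Tree-defining sequences indexed by `ℕ`; unlike in `IsRTree` the sets may have any size. -/
def TreeSeq {γ : Type*} [DecidableEq γ] (E : ℕ → Finset γ) : Prop :=
  ∀ i, 0 < i → ∃ j < i, E i ∩ prev E i ⊆ E j

lemma subset_prev {γ : Type*} [DecidableEq γ] {E : ℕ → Finset γ} {i j : ℕ} (h : j < i) :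
    E j ⊆ prev E i := fun _ hx => Finset.mem_biUnion.2 ⟨j, Finset.mem_range.2 h, hx⟩

lemma prev_succ {γ : Type*} [DecidableEq γ] (E : ℕ → Finset γ) (i : ℕ) :
    prev E (i + 1) = E i ∪ prev E i := by
  simp [prev, Finset.range_add_one]

/-- A function on a finite set `A` injective into `C`, when `A` is not larger than `C`. -/
lemma exists_injOn_into {γ δ : Type*} [Nonempty δ] (A : Finset γ) (C : Finset δ)
    (h : A.card ≤ C.card) : ∃ g : γ → δ, Set.InjOn g (A : Set γ) ∧ ∀ x ∈ A, g x ∈ C := by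
  obtain ⟨e⟩ : Nonempty (A ↪ C) := Function.Embedding.nonempty_of_card_le (by simpa using h)
  refine ⟨fun x => if hx : x ∈ A then (e ⟨x, hx⟩ : δ) else Classical.arbitrary δ, ?_, ?_⟩
  · intro x hx y hy hxy
    have hx' : x ∈ A := hx
    have hy' : y ∈ A := hy
    simp only [hx', hy', dif_pos] at hxy
    simpa using e.injective (Subtype.ext hxy)
  · intro x hx
    simp [hx]

/-- A tree whose edges have at most `C.card` vertices has a colouring with colours `C` that is
injective on each edge. -/
lemma TreeSeq.exists_coloring {γ δ : Type*} [DecidableEq γ] [DecidableEq δ] [Nonempty δ]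
    {E : ℕ → Finset γ} (hE : TreeSeq E) (C : Finset δ) (hC : ∀ i, (E i).card ≤ C.card) (m : ℕ) :
    ∃ ψ : γ → δ, ∀ i < m, Set.InjOn ψ (E i : Set γ) ∧ ∀ x ∈ E i, ψ x ∈ C := by
  induction m with
  | zero => exact ⟨fun _ => Classical.arbitrary δ, by simp⟩
  | succ m ih =>
    obtain ⟨ψ, hψ⟩ := ih
    have hold : Set.InjOn ψ (E m ∩ prev E m : Set γ) ∧ ∀ x ∈ E m ∩ prev E m, ψ x ∈ C := by
      rcases Nat.eq_zero_or_pos m with rfl | hm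
      · simp [prev]
      · obtain ⟨j, hj, hsub⟩ := hE m hm
        refine ⟨(hψ j hj).1.mono ?_, fun x hx => (hψ j hj).2 x (hsub hx)⟩
        exact_mod_cast hsub
    obtain ⟨g, hg1, hg2⟩ := exists_injOn_into (E m \ prev E m)
      (C \ (E m ∩ prev E m).image ψ) (by
        rw [Finset.card_sdiff_of_subset (Finset.image_subset_iff.2 hold.2),
          Finset.card_image_of_injOn (by exact_mod_cast hold.1)]
        have := Finset.card_sdiff_add_card_inter (E m) (prev E m)
        have := hC m
        omega)
    refine ⟨fun x => if x ∈ prev E m then ψ x else g x, fun i hi => ?_⟩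
    rcases Nat.lt_succ_iff_lt_or_eq.1 hi with hi | rfl
    · have hin : ∀ x ∈ E i, x ∈ prev E m := fun x hx => subset_prev hi hx
      refine ⟨fun x hx y hy hxy => ?_, fun x hx => ?_⟩
      · simp only [hin x hx, hin y hy, if_true] at hxy
        exact (hψ i hi).1 hx hy hxy
      · simp only [hin x hx, if_true]
        exact (hψ i hi).2 x hx
    · have hmix : ∀ x ∈ E i, x ∈ prev E i → ∀ y ∈ E i, y ∉ prev E i → ψ x ≠ g y := by
        intro x hx hxp y hy hyp heq
        have := hg2 y (Finset.mem_sdiff.2 ⟨hy, hyp⟩)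
        rw [← heq] at this
        exact (Finset.mem_sdiff.1 this).2
          (Finset.mem_image_of_mem _ (Finset.mem_inter.2 ⟨hx, hxp⟩))
      refine ⟨fun x hx y hy hxy => ?_, fun x hx => ?_⟩
      · by_cases hxp : x ∈ prev E i <;> by_cases hyp : y ∈ prev E i <;>
          simp only [hxp, hyp, if_true, if_false] at hxy
        · exact hold.1 ⟨hx, hxp⟩ ⟨hy, hyp⟩ hxy
        · exact absurd hxy (hmix x hx hxp y hy hyp)
        · exact absurd hxy.symm (hmix y hy hyp x hx hxp)
        · exact hg1 (by simpa using ⟨hx, hxp⟩) (by simpa using ⟨hy, hyp⟩) hxy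
      · by_cases hxp : x ∈ prev E i
        · simp only [hxp, if_true]
          exact hold.2 x (Finset.mem_inter.2 ⟨hx, hxp⟩)
        · simp only [hxp, if_false]
          exact (Finset.mem_sdiff.1 (hg2 x (Finset.mem_sdiff.2 ⟨hx, hxp⟩))).1

/-- Greedy embedding of a tree into a homogeneous family: vertices of colour `c` go to vertices of
colour `c`, and each new edge is attached along a rich kernel. -/
lemma Homog.embed {V γ : Type*} [DecidableEq V] [DecidableEq γ] {r s : ℕ}
    {F : Finset (Finset V)} {χ : V → Fin r} {J : Finset (Finset (Fin r))}
    (h : Homog s F χ J) (hne : F.Nonempty) (hr : 1 ≤ r) {E : ℕ → Finset γ} (hE : TreeSeq E)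
    (ψ : γ → Fin r) (m : ℕ) (hs : (prev E m).card ≤ s)
    (hψ : ∀ i < m, Set.InjOn ψ (E i : Set γ))
    (hJ : ∀ i < m, prev E i = ∅ ∨ E i ⊆ prev E i ∨ (E i ∩ prev E i).image ψ ∈ J) :
    ∃ f : γ → V, Set.InjOn f (prev E m : Set γ) ∧ ∀ i < m, ∃ A ∈ F, (E i).image f ⊆ A := by
  suffices H : ∃ f : γ → V, Set.InjOn f (prev E m : Set γ) ∧ (∀ x ∈ prev E m, χ (f x) = ψ x) ∧
      ∀ i < m, ∃ A ∈ F, (E i).image f ⊆ A by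
    obtain ⟨f, h1, -, h2⟩ := H
    exact ⟨f, h1, h2⟩
  induction m with
  | zero =>
    obtain ⟨A, hA⟩ := hne
    obtain ⟨x, -, -⟩ := h.rainbow.exists_color hA ⟨0, hr⟩
    exact ⟨fun _ => x, by simp [prev], by simp [prev], by simp⟩
  | succ m ih =>
    have hsub : prev E m ⊆ prev E (m + 1) := by
      rw [prev_succ]; exact Finset.subset_union_right
    have hcard := (Finset.card_le_card hsub).trans hs
    obtain ⟨f, hf1, hf2, hf3⟩ := ih hcard (fun i hi => hψ i (by omega)) (fun i hi => hJ i (by omega))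
    by_cases hcov : E m ⊆ prev E m
    · have hp : prev E (m + 1) = prev E m := by
        rw [prev_succ]; exact Finset.union_eq_right.2 hcov
      rw [hp]
      refine ⟨f, hf1, hf2, fun i hi => ?_⟩
      rcases Nat.lt_succ_iff_lt_or_eq.1 hi with hi | rfl
      · exact hf3 i hi
      · rcases Nat.eq_zero_or_pos i with rfl | hi0
        · obtain ⟨A, hA⟩ := hne
          refine ⟨A, hA, ?_⟩
          have : E 0 = ∅ := Finset.subset_empty.1 (by simpa [prev] using hcov)
          simp [this]
        · obtain ⟨j, hj, hEj⟩ := hE i hi0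
          rw [Finset.inter_eq_left.2 hcov] at hEj
          obtain ⟨A, hA, hAs⟩ := hf3 j hj
          exact ⟨A, hA, (Finset.image_subset_image hEj).trans hAs⟩
    -- the next edge, attached along the image of what is already embedded
    obtain ⟨A, hA, hBA, hdis⟩ : ∃ A ∈ F, (E m ∩ prev E m).image f ⊆ A ∧
        Disjoint (A \ (E m ∩ prev E m).image f) ((prev E m).image f) := by
      rcases hJ m (by omega) with h0 | h0 | h0
      · obtain ⟨A, hA⟩ := hne
        exact ⟨A, hA, by simp [h0], by simp [h0]⟩
      · exact absurd h0 hcov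
      · rcases Nat.eq_zero_or_pos m with rfl | hm
        · obtain ⟨A, hA⟩ := hne
          exact ⟨A, hA, by simp [prev], by simp [prev]⟩
        obtain ⟨j, hj, hEj⟩ := hE m hm
        obtain ⟨A', hA', hAs⟩ := hf3 j hj
        have hB : (E m ∩ prev E m).image f ⊆ A' := (Finset.image_subset_image hEj).trans hAs
        have hcp := h.rainbow.cpart_image hA' hB
        have him : ((E m ∩ prev E m).image f).image χ = (E m ∩ prev E m).image ψ := by
          rw [Finset.image_image]
          exact Finset.image_congr fun x hx => hf2 x (Finset.mem_inter.1 hx).2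
        rw [him] at hcp
        have hrich := h.rich _ h0 A' hA'
        rw [hcp] at hrich
        exact hrich _ (Finset.card_image_le.trans hcard)
    choose q hq1 hq2 using fun c => h.rainbow.exists_color hA c
    have hfA : ∀ x ∈ E m, x ∈ prev E m → f x ∈ A := fun x hx hxp =>
      hBA (Finset.mem_image_of_mem _ (Finset.mem_inter.2 ⟨hx, hxp⟩))
    -- a new vertex avoids the old part of the embedding
    have hnew : ∀ x ∈ E m, x ∉ prev E m → q (ψ x) ∉ (prev E m).image f := by
      intro x hx hxp hmem
      have hB : q (ψ x) ∈ (E m ∩ prev E m).image f := by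
        by_contra hB
        exact Finset.disjoint_left.1 hdis (Finset.mem_sdiff.2 ⟨hq1 _, hB⟩) hmem
      obtain ⟨y, hy, hyq⟩ := Finset.mem_image.1 hB
      have hy' := Finset.mem_inter.1 hy
      have : ψ y = ψ x := by rw [← hf2 y hy'.2, hyq, hq2]
      exact hxp (hψ m (by omega) hy'.1 hx this ▸ hy'.2)
    refine ⟨fun x => if x ∈ prev E m then f x else q (ψ x), ?_, ?_, ?_⟩
    · intro x hx y hy hxy
      have hx : x ∈ E m ∪ prev E m := by rw [← prev_succ]; exact hx
      have hy : y ∈ E m ∪ prev E m := by rw [← prev_succ]; exact hy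
      by_cases hxp : x ∈ prev E m <;> by_cases hyp : y ∈ prev E m <;>
        simp only [hxp, hyp, if_true, if_false] at hxy
      · exact hf1 hxp hyp hxy
      · exact absurd (hxy ▸ Finset.mem_image_of_mem f hxp)
          (hnew y ((Finset.mem_union.1 hy).resolve_right hyp) hyp)
      · exact absurd (hxy ▸ Finset.mem_image_of_mem f hyp)
          (hnew x ((Finset.mem_union.1 hx).resolve_right hxp) hxp)
      · refine hψ m (by omega) ((Finset.mem_union.1 hx).resolve_right hxp)
          ((Finset.mem_union.1 hy).resolve_right hyp) ?_
        rw [← hq2 (ψ x), hxy, hq2]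
    · intro x _
      by_cases hxp : x ∈ prev E m
      · simp only [hxp, if_true]; exact hf2 x hxp
      · simp only [hxp, if_false]; exact hq2 _
    · intro i hi
      rcases Nat.lt_succ_iff_lt_or_eq.1 hi with hi | rfl
      · obtain ⟨A', hA', hs'⟩ := hf3 i hi
        refine ⟨A', hA', fun y hy => ?_⟩
        obtain ⟨x, hx, rfl⟩ := Finset.mem_image.1 hy
        simp only [subset_prev hi hx, if_true]
        exact hs' (Finset.mem_image_of_mem _ hx)
      · refine ⟨A, hA, fun y hy => ?_⟩
        obtain ⟨x, hx, rfl⟩ := Finset.mem_image.1 hy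
        by_cases hxp : x ∈ prev E i
        · simp only [hxp, if_true]; exact hfA x hx hxp
        · simp only [hxp, if_false]; exact hq1 _

/-! ### Copies of `H` in homogeneous families -/

/-- An embedding `g` of `H` into a `2`-reducible `r`-tree, listed as `E 0, …, E (m - 1)` (and
continued by empty sets); `p A` and `q A` are two vertices of degree one of the edge `A`. -/
structure TreeModel {α : Type*} [DecidableEq α] (r : ℕ) (H : Finset (Finset α)) where
  m : ℕ
  E : ℕ → Finset ℕ
  tree : TreeSeq E
  card : ∀ i < m, (E i).card = r
  empty : ∀ i, m ≤ i → E i = ∅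
  p : Finset ℕ → ℕ
  q : Finset ℕ → ℕ
  p_mem : ∀ i < m, p (E i) ∈ E i
  q_mem : ∀ i < m, q (E i) ∈ E i
  p_ne_q : ∀ i < m, p (E i) ≠ q (E i)
  p_priv : ∀ i < m, ∀ j, p (E i) ∈ E j → E j = E i
  q_priv : ∀ i < m, ∀ j, q (E i) ∈ E j → E j = E i
  g : α → ℕ
  g_inj : Set.InjOn g ((H.sup id : Finset α) : Set α)
  g_mem : ∀ A ∈ H, ∃ i < m, E i = A.image g

lemma exists_treeModel {α : Type*} [DecidableEq α] (r : ℕ) (H : Finset (Finset α))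
    (hemb : ∃ T : Finset (Finset ℕ), IsRTree r T ∧ Reducible 2 T ∧ ContainsCopy T H) :
    Nonempty (TreeModel r H) := by
  obtain ⟨T, ⟨m, E₀, rfl, hT, hcard⟩, hred, g, hg, hgm⟩ := hemb
  set T := Finset.image E₀ univ with hTdef
  let E : ℕ → Finset ℕ := fun k => if h : k < m then E₀ ⟨k, h⟩ else ∅
  have hlt : ∀ k (h : k < m), E k = E₀ ⟨k, h⟩ := fun k h => by simp [E, h]
  have hge : ∀ k, m ≤ k → E k = ∅ := fun k h => by simp [E, h]
  have hET : ∀ k < m, E k ∈ T := fun k h => by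
    rw [hlt k h]; exact Finset.mem_image_of_mem _ (Finset.mem_univ _)
  have hpair : ∀ A : Finset ℕ, ∃ pq : ℕ × ℕ, A ∈ T → pq.1 ∈ A ∧ pq.2 ∈ A ∧ pq.1 ≠ pq.2 ∧
      hdeg T pq.1 = 1 ∧ hdeg T pq.2 = 1 := by
    intro A
    by_cases hA : A ∈ T
    · obtain ⟨x, y, hx, hy, hxy⟩ := Finset.one_lt_card_iff.1 (hred A hA)
      rw [Finset.mem_filter] at hx hy
      exact ⟨(x, y), fun _ => ⟨hx.1, hy.1, hxy, hx.2, hy.2⟩⟩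
    · exact ⟨(0, 0), fun h => absurd h hA⟩
  choose pq hpq using hpair
  have hpriv : ∀ x, hdeg T x = 1 → ∀ i < m, ∀ j, x ∈ E i → x ∈ E j → E j = E i := by
    intro x hx i hi j hxi hxj
    have hj : j < m := by
      by_contra hj
      rw [hge j (not_lt.1 hj)] at hxj
      simp at hxj
    obtain ⟨A, hA⟩ := Finset.card_eq_one.1 hx
    have h1 : E i ∈ ({A} : Finset (Finset ℕ)) := hA ▸ Finset.mem_filter.2 ⟨hET i hi, hxi⟩
    have h2 : E j ∈ ({A} : Finset (Finset ℕ)) := hA ▸ Finset.mem_filter.2 ⟨hET j hj, hxj⟩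
    rw [Finset.mem_singleton] at h1 h2
    rw [h1, h2]
  refine ⟨⟨m, E, ?_, fun i hi => by rw [hlt i hi]; exact hcard _, hge, fun A => (pq A).1,
    fun A => (pq A).2, fun i hi => (hpq _ (hET i hi)).1, fun i hi => (hpq _ (hET i hi)).2.1,
    fun i hi => (hpq _ (hET i hi)).2.2.1,
    fun i hi j => hpriv _ (hpq _ (hET i hi)).2.2.2.1 i hi j (hpq _ (hET i hi)).1,
    fun i hi j => hpriv _ (hpq _ (hET i hi)).2.2.2.2 i hi j (hpq _ (hET i hi)).2.1,
    g, hg, ?_⟩⟩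
  · intro i hi
    by_cases him : i < m
    · obtain ⟨j, hj, hsub⟩ := hT ⟨i, him⟩ hi
      refine ⟨j.1, hj, ?_⟩
      rw [hlt i him, hlt j.1 j.2]
      refine fun x hx => hsub ?_
      rw [Finset.mem_inter] at hx ⊢
      refine ⟨hx.1, ?_⟩
      obtain ⟨k, hk, hxk⟩ := Finset.mem_biUnion.1 hx.2
      rw [Finset.mem_range] at hk
      rw [hlt k (hk.trans him)] at hxk
      rw [Finset.mem_sup]
      exact ⟨⟨k, hk.trans him⟩, Finset.mem_Iio.2 hk, hxk⟩
    · exact ⟨0, hi, by simp [hge i (not_lt.1 him)]⟩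
  · intro A hA
    obtain ⟨i, -, hi⟩ := Finset.mem_image.1 (hgm A hA)
    exact ⟨i.1, i.2, by rw [hlt i.1 i.2, hi]⟩

/-- Shrinking the edges of a tree compatibly with their intersections yields a tree. -/
lemma TreeSeq.comp {γ : Type*} [DecidableEq γ] {E : ℕ → Finset γ} (hE : TreeSeq E)
    (φ : Finset γ → Finset γ) (hφ : ∀ i, φ (E i) ⊆ E i)
    (hφ' : ∀ i j, ∀ x ∈ φ (E i), x ∈ E j → x ∈ φ (E j)) : TreeSeq (fun i => φ (E i)) := by
  intro i hi
  obtain ⟨j, hj, hsub⟩ := hE i hi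
  refine ⟨j, hj, fun x hx => ?_⟩
  rw [Finset.mem_inter] at hx
  refine hφ' i j x hx.1 (hsub (Finset.mem_inter.2 ⟨hφ i hx.1, ?_⟩))
  obtain ⟨k, hk, hxk⟩ := Finset.mem_biUnion.1 hx.2
  exact Finset.mem_biUnion.2 ⟨k, hk, hφ k hxk⟩

lemma mem_hsup {α : Type*} [DecidableEq α] {H : Finset (Finset α)} {x : α} :
    x ∈ H.sup id ↔ ∃ A ∈ H, x ∈ A := by
  simp [Finset.mem_sup]

/-- An embedding of those tree edges that come from `H` gives a copy of `H`. -/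
lemma TreeModel.containsCopy {α V : Type*} [DecidableEq α] [DecidableEq V] {r : ℕ}
    {H : Finset (Finset α)} (M : TreeModel r H) {F : Finset (Finset V)}
    (hF : ∀ A ∈ F, A.card = r) (E' : ℕ → Finset ℕ)
    (hE' : ∀ i < M.m, (∃ A ∈ H, M.E i = A.image M.g) → E' i = M.E i) (f : ℕ → V)
    (hf : Set.InjOn f (prev E' M.m : Set ℕ)) (hfF : ∀ i < M.m, ∃ A ∈ F, (E' i).image f ⊆ A) :
    ContainsCopy F H := by
  have hmem : ∀ A ∈ H, ∃ i < M.m, E' i = A.image M.g ∧ E' i = M.E i := by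
    intro A hA
    obtain ⟨i, hi, hiA⟩ := M.g_mem A hA
    have := hE' i hi ⟨A, hA, hiA⟩
    exact ⟨i, hi, this.trans hiA, this⟩
  have hprev : ∀ x ∈ H.sup id, M.g x ∈ prev E' M.m := by
    intro x hx
    obtain ⟨A, hA, hxA⟩ := mem_hsup.1 hx
    obtain ⟨i, hi, hiA, -⟩ := hmem A hA
    exact subset_prev hi (hiA ▸ Finset.mem_image_of_mem _ hxA)
  refine ⟨f ∘ M.g, fun x hx y hy hxy => M.g_inj hx hy (hf (hprev x hx) (hprev y hy) hxy), ?_⟩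
  intro A hA
  obtain ⟨i, hi, hiA, hiE⟩ := hmem A hA
  obtain ⟨B, hB, hsub⟩ := hfF i hi
  have hcard : ((E' i).image f).card = r := by
    rw [Finset.card_image_of_injOn (hf.mono (by exact_mod_cast subset_prev hi)), hiE,
      M.card i hi]
  have := Finset.eq_of_subset_of_card_le hsub (by rw [hcard, hF B hB])
  rw [← Finset.image_image, ← hiA, this]
  exact hB

/-- If two colours are free, the tree embeds with two degree-one vertices of each edge put on these
colours, because all other intersections are rich kernels. -/
lemma TreeModel.copy_of_free {α V : Type*} [DecidableEq α] [DecidableEq V] {r s : ℕ}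
    {H : Finset (Finset α)} (M : TreeModel r H) {F : Finset (Finset V)} {χ : V → Fin r}
    {J : Finset (Finset (Fin r))} (h : Homog s F χ J) (hne : F.Nonempty)
    (hs : (prev M.E M.m).card ≤ s) (a b : Fin r) (hab : a ≠ b)
    (hJ : ∀ K, a ∉ K → b ∉ K → K ∈ J) : ContainsCopy F H := by
  have hr : 1 ≤ r := Fin.pos a
  have : Nonempty (Fin r) := ⟨a⟩
  let φ : Finset ℕ → Finset ℕ := fun A => (A.erase (M.p A)).erase (M.q A)
  have hlt : ∀ j x, x ∈ M.E j → j < M.m := fun j x hx => by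
    by_contra hj
    rw [M.empty j (not_lt.1 hj)] at hx
    simp at hx
  have htree : TreeSeq (fun i => φ (M.E i)) := by
    refine M.tree.comp φ (fun i => (Finset.erase_subset _ _).trans (Finset.erase_subset _ _)) ?_
    intro i j x hx hxj
    simp only [φ, Finset.mem_erase] at hx ⊢
    have hj := hlt j x hxj
    refine ⟨fun e => ?_, fun e => ?_, hxj⟩
    · have := M.q_priv j hj i (e ▸ hx.2.2)
      rw [this] at hx
      exact hx.1 e
    · have := M.p_priv j hj i (e ▸ hx.2.2)
      rw [this] at hx
      exact hx.2.1 e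
  have hcardφ : ∀ i < M.m, (φ (M.E i)).card = r - 2 := by
    intro i hi
    simp only [φ]
    rw [Finset.card_erase_of_mem (Finset.mem_erase.2 ⟨(M.p_ne_q i hi).symm, M.q_mem i hi⟩),
      Finset.card_erase_of_mem (M.p_mem i hi), M.card i hi, Nat.sub_sub]
  have hC : ((univ.erase a).erase b : Finset (Fin r)).card = r - 2 := by
    rw [Finset.card_erase_of_mem (by simp [hab.symm]), Finset.card_erase_of_mem (by simp),
      Finset.card_univ, Fintype.card_fin, Nat.sub_sub]
  obtain ⟨ψ₀, hψ₀⟩ := htree.exists_coloring ((univ.erase a).erase b) (by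
    intro i
    rw [hC]
    by_cases hi : i < M.m
    · exact (hcardφ i hi).le
    · simp [φ, M.empty i (not_lt.1 hi)]) M.m
  let ψ : ℕ → Fin r := fun x => if ∃ i < M.m, x = M.p (M.E i) then a else
    if ∃ i < M.m, x = M.q (M.E i) then b else ψ₀ x
  have hψ : ∀ i < M.m, ∀ x ∈ M.E i, ψ x =
      if x = M.p (M.E i) then a else if x = M.q (M.E i) then b else ψ₀ x := by
    intro i hi x hx
    have e1 : (∃ j < M.m, x = M.p (M.E j)) ↔ x = M.p (M.E i) := by
      refine ⟨?_, fun e => ⟨i, hi, e⟩⟩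
      rintro ⟨j, hj, e⟩
      rw [M.p_priv j hj i (e ▸ hx)]
      exact e
    have e2 : (∃ j < M.m, x = M.q (M.E j)) ↔ x = M.q (M.E i) := by
      refine ⟨?_, fun e => ⟨i, hi, e⟩⟩
      rintro ⟨j, hj, e⟩
      rw [M.q_priv j hj i (e ▸ hx)]
      exact e
    simp only [ψ, e1, e2]
  have hψ₀C : ∀ i < M.m, ∀ x ∈ M.E i, x ≠ M.p (M.E i) → x ≠ M.q (M.E i) →
      x ∈ φ (M.E i) ∧ ψ₀ x ≠ a ∧ ψ₀ x ≠ b := by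
    intro i hi x hx hp hq
    have hxφ : x ∈ φ (M.E i) := by simp [φ, hx, hp, hq]
    have := (hψ₀ i hi).2 x hxφ
    simp only [Finset.mem_erase, Finset.mem_univ, and_true] at this
    exact ⟨hxφ, this.2, this.1⟩
  obtain ⟨f, hf1, hf2⟩ := h.embed hne hr M.tree ψ M.m hs (by
    intro i hi x hx y hy hxy
    rw [hψ i hi x hx, hψ i hi y hy] at hxy
    by_cases hxp : x = M.p (M.E i) <;> by_cases hyp : y = M.p (M.E i)
    · rw [hxp, hyp]
    · rw [if_pos hxp, if_neg hyp] at hxy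
      split_ifs at hxy with hyq
      · exact absurd hxy hab
      · exact absurd hxy.symm (hψ₀C i hi y hy hyp hyq).2.1
    · rw [if_neg hxp, if_pos hyp] at hxy
      split_ifs at hxy with hxq
      · exact absurd hxy.symm hab
      · exact absurd hxy (hψ₀C i hi x hx hxp hxq).2.1
    · rw [if_neg hxp, if_neg hyp] at hxy
      split_ifs at hxy with hxq hyq hyq
      · rw [hxq, hyq]
      · exact absurd hxy.symm (hψ₀C i hi y hy hyp hyq).2.2
      · exact absurd hxy (hψ₀C i hi x hx hxp hxq).2.2
      · exact (hψ₀ i hi).1 (hψ₀C i hi x hx hxp hxq).1 (hψ₀C i hi y hy hyp hyq).1 hxy) (by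
    intro i hi
    by_cases hsub : M.E i ⊆ prev M.E i
    · exact Or.inr (Or.inl hsub)
    have hpn : M.p (M.E i) ∉ prev M.E i := fun hmem => by
      obtain ⟨j, hj, hx⟩ := Finset.mem_biUnion.1 hmem
      exact hsub (M.p_priv i hi j hx ▸ subset_prev (Finset.mem_range.1 hj))
    have hqn : M.q (M.E i) ∉ prev M.E i := fun hmem => by
      obtain ⟨j, hj, hx⟩ := Finset.mem_biUnion.1 hmem
      exact hsub (M.q_priv i hi j hx ▸ subset_prev (Finset.mem_range.1 hj))
    have key : ∀ x ∈ M.E i ∩ prev M.E i, ψ x ≠ a ∧ ψ x ≠ b := by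
      intro x hx
      rw [Finset.mem_inter] at hx
      have hxp : x ≠ M.p (M.E i) := fun e => hpn (e ▸ hx.2)
      have hxq : x ≠ M.q (M.E i) := fun e => hqn (e ▸ hx.2)
      rw [hψ i hi x hx.1, if_neg hxp, if_neg hxq]
      exact (hψ₀C i hi x hx.1 hxp hxq).2
    refine Or.inr (Or.inr (hJ _ ?_ ?_)) <;> intro hmem <;>
      obtain ⟨x, hx, e⟩ := Finset.mem_image.1 hmem
    · exact (key x hx).1 e
    · exact (key x hx).2 e)
  exact M.containsCopy (fun A hA => (h.rainbow A hA).1) M.E (fun _ _ _ => rfl) f hf1 hf2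

/-- A star-like family contains every `H` whose edges share a vertex: the tree edges through that
vertex again form a tree, and it embeds with the common vertex on the centre colour. -/
lemma TreeModel.copy_of_star {α V : Type*} [DecidableEq α] [DecidableEq V] {r s : ℕ}
    {H : Finset (Finset α)} (M : TreeModel r H) {F : Finset (Finset V)} {χ : V → Fin r}
    {J : Finset (Finset (Fin r))} (h : Homog s F χ J) (hne : F.Nonempty)
    (hs : (prev M.E M.m).card ≤ s) (c : Fin r)
    (hJ : ∀ K : Finset (Fin r), K ≠ univ → c ∈ K → K ∈ J) (x₀ : α) (hx₀ : ∀ A ∈ H, x₀ ∈ A) :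
    ContainsCopy F H := by
  have hr : 1 ≤ r := Fin.pos c
  have : Nonempty (Fin r) := ⟨c⟩
  let E' : ℕ → Finset ℕ := fun i => if M.g x₀ ∈ M.E i then M.E i else ∅
  have hE'sub : ∀ i, E' i ⊆ M.E i := fun i => by simp only [E']; split_ifs <;> simp
  have hE'mem : ∀ i x, x ∈ E' i → M.g x₀ ∈ E' i ∧ M.g x₀ ∈ M.E i := fun i x hx => by
    simp only [E'] at hx ⊢
    split_ifs at hx ⊢ with h1
    · exact ⟨h1, h1⟩
    · simp at hx
  have hprev : ∀ i, prev E' i ⊆ prev M.E i := fun i x hx => by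
    obtain ⟨j, hj, hxj⟩ := Finset.mem_biUnion.1 hx
    exact Finset.mem_biUnion.2 ⟨j, hj, hE'sub j hxj⟩
  have hprev₀ : ∀ i x, x ∈ prev E' i → M.g x₀ ∈ prev E' i := fun i x hx => by
    obtain ⟨j, hj, hxj⟩ := Finset.mem_biUnion.1 hx
    exact Finset.mem_biUnion.2 ⟨j, hj, (hE'mem j x hxj).1⟩
  have htree : TreeSeq E' := by
    intro i hi
    obtain ⟨j, hj, hsub⟩ := M.tree i hi
    refine ⟨j, hj, fun x hx => ?_⟩
    rw [Finset.mem_inter] at hx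
    have h1 : M.g x₀ ∈ M.E j := hsub (Finset.mem_inter.2
      ⟨(hE'mem i x hx.1).2, hprev i (hprev₀ i x hx.2)⟩)
    simp only [E', h1, if_true]
    exact hsub (Finset.mem_inter.2 ⟨hE'sub i hx.1, hprev i hx.2⟩)
  obtain ⟨ψ₀, hψ₀⟩ := M.tree.exists_coloring (univ : Finset (Fin r)) (by
    intro i
    rw [Finset.card_univ, Fintype.card_fin]
    by_cases hi : i < M.m
    · exact (M.card i hi).le
    · simp [M.empty i (not_lt.1 hi)]) M.m
  let ψ : ℕ → Fin r := fun x => Equiv.swap (ψ₀ (M.g x₀)) c (ψ₀ x)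
  obtain ⟨f, hf1, hf2⟩ := h.embed hne hr htree ψ M.m
    ((Finset.card_le_card (hprev M.m)).trans hs) (by
      intro i hi x hx y hy hxy
      exact (hψ₀ i hi).1 (hE'sub i hx) (hE'sub i hy) ((Equiv.swap _ _).injective hxy)) (by
      intro i hi
      rcases (prev E' i).eq_empty_or_nonempty with h0 | ⟨y, hy⟩
      · exact Or.inl h0
      right
      by_cases hsub : E' i ⊆ prev E' i
      · exact Or.inl hsub
      right
      obtain ⟨x, hx, hxp⟩ := Finset.not_subset.1 hsub
      refine hJ _ (fun hu => ?_) ?_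
      · have h1 : (E' i ∩ prev E' i).card < (E' i).card := Finset.card_lt_card
          ((Finset.ssubset_iff_of_subset Finset.inter_subset_left).2
            ⟨x, hx, fun hh => hxp (Finset.mem_inter.1 hh).2⟩)
        have h2 := Finset.card_le_card (hE'sub i)
        have h3 := Finset.card_image_le (s := E' i ∩ prev E' i) (f := ψ)
        rw [hu, Finset.card_univ, Fintype.card_fin] at h3
        rw [M.card i hi] at h2
        omega
      · exact Finset.mem_image.2 ⟨M.g x₀, Finset.mem_inter.2
          ⟨(hE'mem i x hx).1, hprev₀ i y hy⟩, by simp [ψ]⟩)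
  refine M.containsCopy (fun A hA => (h.rainbow A hA).1) E' ?_ f hf1 hf2
  rintro i hi ⟨A, hA, hiA⟩
  have : M.g x₀ ∈ M.E i := hiA ▸ Finset.mem_image_of_mem _ (hx₀ A hA)
  simp [E', this]

/-! ### Common links of `σ` vertices -/

/-- If a sufficiently rich family lies in the link of each of `|S|` vertices, the tree with the
cross-cut `S` removed embeds in it, and `S` is placed on these vertices. Tree edges missing `S` do
not matter for `H`; they are shrunk by a degree-one vertex. -/
lemma TreeModel.copy_of_commonLink {α V : Type*} [DecidableEq α] [DecidableEq V] {r s : ℕ}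
    (hr : 2 ≤ r) {H : Finset (Finset α)} (hH : ∀ A ∈ H, A.card = r) (M : TreeModel r H)
    {S : Finset α} (hS : IsCrossCut H S) {F B : Finset (Finset V)} {χ : V → Fin (r - 1)}
    {J : Finset (Finset (Fin (r - 1)))} (h : Homog s B χ J) (hne : B.Nonempty)
    (hs : (prev M.E M.m).card ≤ s) (hJ : ∀ K : Finset (Fin (r - 1)), K ≠ univ → K ∈ J)
    {W : Finset V} (hW : S.card ≤ W.card) (hB : ∀ A ∈ B, ∀ v ∈ W, v ∉ A ∧ insert v A ∈ F) :
    ContainsCopy F H := by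
  have c₀ : Fin (r - 1) := ⟨0, by omega⟩
  have : Nonempty (Fin (r - 1)) := ⟨c₀⟩
  have : Nonempty V := by
    obtain ⟨A, hA⟩ := hne
    obtain ⟨x, -, -⟩ := h.rainbow.exists_color hA c₀
    exact ⟨x⟩
  let Q : Finset ℕ := (S ∩ H.sup id).image M.g
  let φ : Finset ℕ → Finset ℕ := fun A => if (A ∩ Q).Nonempty then A \ Q else A.erase (M.p A)
  have hlt : ∀ j x, x ∈ M.E j → j < M.m := fun j x hx => by
    by_contra hj
    rw [M.empty j (not_lt.1 hj)] at hx
    simp at hx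
  have hφsub : ∀ A, φ A ⊆ A := fun A => by
    simp only [φ]
    split_ifs
    · exact Finset.sdiff_subset
    · exact Finset.erase_subset _ _
  have hφQ : ∀ A, ∀ x ∈ φ A, x ∉ Q := fun A x hx hxQ => by
    simp only [φ] at hx
    split_ifs at hx with h1
    · exact (Finset.mem_sdiff.1 hx).2 hxQ
    · exact h1 ⟨x, Finset.mem_inter.2 ⟨Finset.mem_of_mem_erase hx, hxQ⟩⟩
  have htree : TreeSeq (fun i => φ (M.E i)) := by
    refine M.tree.comp φ (fun i => hφsub _) ?_
    intro i j x hx hxj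
    by_cases h1 : (M.E j ∩ Q).Nonempty
    · simp only [φ, if_pos h1]
      exact Finset.mem_sdiff.2 ⟨hxj, hφQ _ x hx⟩
    · simp only [φ, if_neg h1]
      refine Finset.mem_erase.2 ⟨fun e => ?_, hxj⟩
      have := M.p_priv j (hlt j x hxj) i (e ▸ hφsub _ hx)
      rw [this] at hx
      simp only [φ, if_neg h1] at hx
      exact (Finset.mem_erase.1 hx).1 e
  have hcardφ : ∀ i, (φ (M.E i)).card ≤ r - 1 := by
    intro i
    by_cases hi : i < M.m
    · have hc := M.card i hi
      simp only [φ]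
      split_ifs with h1
      · rw [← Finset.sdiff_inter_self_left, Finset.card_sdiff_of_subset Finset.inter_subset_left,
          hc]
        have := h1.card_pos
        omega
      · rw [Finset.card_erase_of_mem (M.p_mem i hi), hc]
    · have := Finset.card_le_card (hφsub (M.E i))
      rw [M.empty i (not_lt.1 hi)] at this ⊢
      simp only [Finset.card_empty] at this
      omega
  obtain ⟨ψ, hψ⟩ := htree.exists_coloring (univ : Finset (Fin (r - 1))) (by
    intro i
    rw [Finset.card_univ, Fintype.card_fin]
    exact hcardφ i) M.m
  have hprev : prev (fun i => φ (M.E i)) M.m ⊆ prev M.E M.m := fun x hx => by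
    obtain ⟨j, hj, hxj⟩ := Finset.mem_biUnion.1 hx
    exact Finset.mem_biUnion.2 ⟨j, hj, hφsub _ hxj⟩
  obtain ⟨f, hf1, hf2⟩ := h.embed hne (by omega) htree ψ M.m
    ((Finset.card_le_card hprev).trans hs) (fun i hi => (hψ i hi).1) (by
      intro i hi
      right
      by_cases hsub : φ (M.E i) ⊆ prev (fun i => φ (M.E i)) i
      · exact Or.inl hsub
      right
      obtain ⟨x, hx, hxp⟩ := Finset.not_subset.1 hsub
      refine hJ _ (fun hu => ?_)
      have h1 : (φ (M.E i) ∩ prev (fun i => φ (M.E i)) i).card < (φ (M.E i)).card :=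
        Finset.card_lt_card ((Finset.ssubset_iff_of_subset Finset.inter_subset_left).2
          ⟨x, hx, fun hh => hxp (Finset.mem_inter.1 hh).2⟩)
      have h2 := hcardφ i
      have h3 := Finset.card_image_le (s := φ (M.E i) ∩ prev (fun i => φ (M.E i)) i) (f := ψ)
      rw [hu, Finset.card_univ, Fintype.card_fin] at h3
      omega)
  obtain ⟨e, he1, he2⟩ := exists_injOn_into S W hW
  -- the shrunken tree edge belonging to an edge `A` of `H` is `A \ S`
  have hA : ∀ A ∈ H, ∃ i < M.m, φ (M.E i) = (A \ S).image M.g := by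
    intro A hA
    obtain ⟨i, hi, hiA⟩ := M.g_mem A hA
    have hAsup : ∀ x ∈ A, x ∈ H.sup id := fun x hx => mem_hsup.2 ⟨A, hA, hx⟩
    refine ⟨i, hi, ?_⟩
    obtain ⟨x, hx⟩ : (A ∩ S).Nonempty := Finset.card_pos.1 (by rw [hS A hA]; omega)
    rw [Finset.mem_inter] at hx
    have hxQ : M.g x ∈ Q := Finset.mem_image_of_mem _
      (Finset.mem_inter.2 ⟨hx.2, hAsup x hx.1⟩)
    have h1 : (M.E i ∩ Q).Nonempty := ⟨M.g x, Finset.mem_inter.2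
      ⟨hiA ▸ Finset.mem_image_of_mem _ hx.1, hxQ⟩⟩
    have h2 : φ (M.E i) = M.E i \ Q := if_pos h1
    rw [h2, hiA]
    ext y
    simp only [Finset.mem_sdiff, Finset.mem_image, Q, Finset.mem_inter]
    constructor
    · rintro ⟨⟨z, hz, rfl⟩, hn⟩
      exact ⟨z, ⟨hz, fun hzS => hn ⟨z, ⟨hzS, hAsup z hz⟩, rfl⟩⟩, rfl⟩
    · rintro ⟨z, ⟨hz, hzS⟩, rfl⟩
      refine ⟨⟨z, hz, rfl⟩, ?_⟩
      rintro ⟨w, ⟨hwS, hw⟩, hwz⟩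
      exact hzS (M.g_inj hw (hAsup z hz) hwz ▸ hwS)
  have hmem : ∀ x ∈ H.sup id, x ∉ S → M.g x ∈ prev (fun i => φ (M.E i)) M.m ∧
      ∃ B₀ ∈ B, f (M.g x) ∈ B₀ := by
    intro x hx hxS
    obtain ⟨A, hAH, hxA⟩ := mem_hsup.1 hx
    obtain ⟨i, hi, hiA⟩ := hA A hAH
    have h1 : M.g x ∈ φ (M.E i) := hiA ▸ Finset.mem_image_of_mem _ (Finset.mem_sdiff.2 ⟨hxA, hxS⟩)
    obtain ⟨B₀, hB₀, hsub⟩ := hf2 i hi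
    exact ⟨subset_prev (E := fun i => φ (M.E i)) hi h1, B₀, hB₀,
      hsub (Finset.mem_image_of_mem _ h1)⟩
  refine ⟨fun x => if x ∈ S then e x else f (M.g x), ?_, ?_⟩
  · intro x hx y hy hxy
    simp only at hxy
    have hmix : ∀ x y, x ∈ S → y ∈ H.sup id → y ∉ S → e x ≠ f (M.g y) := by
      intro x y hxS hy hyS heq
      obtain ⟨-, B₀, hB₀, hyB⟩ := hmem y hy hyS
      exact (hB B₀ hB₀ _ (he2 x hxS)).1 (heq ▸ hyB)
    split_ifs at hxy with hxS hyS hyS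
    · exact he1 hxS hyS hxy
    · exact absurd hxy (hmix x y hxS hy hyS)
    · exact absurd hxy.symm (hmix y x hyS hx hxS)
    · exact M.g_inj hx hy (hf1 (hmem x hx hxS).1 (hmem y hy hyS).1 hxy)
  · intro A hAH
    obtain ⟨i, hi, hiA⟩ := hA A hAH
    obtain ⟨B₀, hB₀, hsub⟩ := hf2 i hi
    obtain ⟨x, hx⟩ := Finset.card_eq_one.1 (hS A hAH)
    have hxA : x ∈ A ∩ S := hx ▸ Finset.mem_singleton_self x
    rw [Finset.mem_inter] at hxA
    have hAsup : ∀ x ∈ A, x ∈ H.sup id := fun x hx => mem_hsup.2 ⟨A, hAH, hx⟩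
    have hcard : ((A \ S).image (fun y => f (M.g y))).card = r - 1 := by
      rw [Finset.card_image_of_injOn, ← Finset.sdiff_inter_self_left,
        Finset.card_sdiff_of_subset Finset.inter_subset_left, hS A hAH, hH A hAH]
      intro y hy z hz hyz
      rw [Finset.mem_coe, Finset.mem_sdiff] at hy hz
      exact M.g_inj (hAsup y hy.1) (hAsup z hz.1) (hf1 (hmem y (hAsup y hy.1) hy.2).1
        (hmem z (hAsup z hz.1) hz.2).1 hyz)
    have himg : (A \ S).image (fun y => f (M.g y)) = B₀ := by
      refine Finset.eq_of_subset_of_card_le ?_ (by rw [hcard, (h.rainbow B₀ hB₀).1])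
      rw [hiA, Finset.image_image] at hsub
      exact hsub
    have : A.image (fun x => if x ∈ S then e x else f (M.g x)) = insert (e x) B₀ := by
      rw [← himg]
      ext z
      simp only [Finset.mem_image, Finset.mem_insert, Finset.mem_sdiff]
      constructor
      · rintro ⟨y, hy, rfl⟩
        by_cases hyS : y ∈ S
        · have : y ∈ ({x} : Finset α) := hx ▸ Finset.mem_inter.2 ⟨hy, hyS⟩
          rw [Finset.mem_singleton] at this
          left
          rw [if_pos hyS, this]
        · right
          exact ⟨y, ⟨hy, hyS⟩, by rw [if_neg hyS]⟩
      · rintro (rfl | ⟨y, ⟨hy, hyS⟩, rfl⟩)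
        · exact ⟨x, hxA.1, by rw [if_pos hxA.2]⟩
        · exact ⟨y, hy, by rw [if_neg hyS]⟩
    rw [this]
    exact (hB B₀ hB₀ _ (he2 x hxA.2)).2

/-- The `(r - 1)`-sets lying in the link of every vertex of `W`. -/
def commonLink {V : Type*} [Fintype V] [DecidableEq V] (r : ℕ) (F : Finset (Finset V))
    (W : Finset V) : Finset (Finset V) :=
  (powersetCard (r - 1) univ).filter (fun A => ∀ v ∈ W, v ∉ A ∧ insert v A ∈ F)

lemma mem_commonLink {V : Type*} [Fintype V] [DecidableEq V] {r : ℕ} {F : Finset (Finset V)}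
    {W A : Finset V} : A ∈ commonLink r F W ↔
      A.card = r - 1 ∧ ∀ v ∈ W, v ∉ A ∧ insert v A ∈ F := by
  simp [commonLink, Finset.mem_powersetCard]

/-- In a homogeneous subfamily of the common link, either some `r - 2` colours determine the edge, or
all proper colour sets are kernels and a copy of `H` appears. -/
lemma exists_commonLink_bound {α : Type*} [DecidableEq α] {r : ℕ} (hr : 2 ≤ r)
    {H : Finset (Finset α)} (hH : ∀ A ∈ H, A.card = r) (M : TreeModel r H)
    {S : Finset α} (hS : IsCrossCut H S) :
    ∃ C : ℕ, ∀ (n : ℕ) (F : Finset (Finset (Fin n))), ¬ ContainsCopy F H →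
      ∀ W : Finset (Fin n), W.card = S.card → (commonLink r F W).card ≤ C * n ^ (r - 2) := by
  obtain ⟨C, -, hC⟩ := exists_homog (r - 1) (2 * (r - 1) + (prev M.E M.m).card + 1)
    (by omega) (by omega)
  refine ⟨C, fun n F hF W hW => ?_⟩
  obtain ⟨B, hB, χ, J, hle, h⟩ := hC n (commonLink r F W) (fun E hE =>
    (mem_commonLink.1 hE).1)
  refine hle.trans (Nat.mul_le_mul_left _ ?_)
  rcases B.eq_empty_or_nonempty with rfl | hne
  · simp
  by_cases hunc : ∃ c : Fin (r - 1), univ.erase c ∉ J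
  · obtain ⟨c, hc⟩ := hunc
    have := h.card_le_of_uncovered (univ.erase c) (fun L hL hsub => by
      by_cases hcL : c ∈ L
      · refine h.univ_notMem ?_
        rwa [← Finset.eq_univ_of_forall (s := L) (fun d => by
          by_cases hd : d = c
          · rwa [hd]
          · exact hsub (by simp [hd]))]
      · refine hc ?_
        rwa [Finset.Subset.antisymm hsub (fun d hd => Finset.mem_erase.2
          ⟨fun e => hcL (e ▸ hd), Finset.mem_univ _⟩)])
    rwa [Finset.card_erase_of_mem (Finset.mem_univ _), Finset.card_univ, Fintype.card_fin,
      Nat.sub_sub] at this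
  push Not at hunc
  refine absurd (M.copy_of_commonLink (F := F) hr hH hS h hne (by omega) (fun K hK => ?_) hW.ge
    (fun A hA => (mem_commonLink.1 (hB hA)).2)) hF
  refine h.mem_of_separated (by omega) hne hK (fun d hd => ⟨_, hunc d, fun e he => ?_, by simp⟩)
  exact Finset.mem_erase.2 ⟨fun hed => hd (hed ▸ he), Finset.mem_univ _⟩

/-! ### Edges meeting a small set of heavy vertices -/

/-- Each edge meeting `W` is charged to the `(r - 1)`-set left after removing one of its vertices in
`W`; a set charged `σ` times or more lies in the common link of `σ` vertices of `W`. -/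
lemma card_meeting_le {n r σ : ℕ} (hσ : 1 ≤ σ) (F : Finset (Finset (Fin n)))
    (hF : ∀ E ∈ F, E.card = r) (W : Finset (Fin n)) (D : ℕ)
    (hD : ∀ W₀ : Finset (Fin n), W₀.card = σ → (commonLink r F W₀).card ≤ D) :
    (F.filter (fun E => ¬ Disjoint E W)).card ≤
      (σ - 1) * n.choose (r - 1) + W.card ^ (σ + 1) * D := by
  set G := F.filter (fun E => ¬ Disjoint E W) with hG
  rcases G.eq_empty_or_nonempty with h0 | ⟨E₀, hE₀⟩
  · simp [h0]
  have hex : ∀ E ∈ G, ∃ v, v ∈ E ∧ v ∈ W := fun E hE =>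
    Finset.not_disjoint_iff.1 (Finset.mem_filter.1 hE).2
  have : Nonempty (Fin n) := ⟨(hex E₀ hE₀).choose⟩
  choose! w hw using hex
  have hins : ∀ E ∈ G, insert (w E) (E.erase (w E)) = E := fun E hE =>
    Finset.insert_erase (hw E hE).1
  have hGF : ∀ E ∈ G, E ∈ F := fun E hE => (Finset.mem_filter.1 hE).1
  let P : Finset (Finset (Fin n)) := powersetCard (r - 1) univ
  let X : Finset (Finset (Fin n)) := (powersetCard σ W).biUnion (commonLink r F)
  have hX : X.card ≤ W.card ^ σ * D := by
    refine (Finset.card_biUnion_le_card_mul _ _ D (fun W₀ hW₀ =>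
      hD W₀ (Finset.mem_powersetCard.1 hW₀).2)).trans (Nat.mul_le_mul_right _ ?_)
    rw [Finset.card_powersetCard]
    exact Nat.choose_le_pow _ _
  have hXP : X ⊆ P := by
    intro A hA
    obtain ⟨W₀, -, hA⟩ := Finset.mem_biUnion.1 hA
    exact Finset.mem_powersetCard.2 ⟨Finset.subset_univ _, (mem_commonLink.1 hA).1⟩
  have hfib : ∀ A ∈ P, (G.filter (fun E => E.erase (w E) = A)).card ≤
      (σ - 1) + if A ∈ X then W.card else 0 := by
    intro A hA
    have hinj : Set.InjOn w (G.filter (fun E => E.erase (w E) = A) : Set (Finset (Fin n))) := by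
      intro E hE E' hE' heq
      rw [Finset.mem_coe, Finset.mem_filter] at hE hE'
      rw [← hins E hE.1, ← hins E' hE'.1, hE.2, hE'.2, heq]
    rw [← Finset.card_image_of_injOn hinj]
    set N := (G.filter (fun E => E.erase (w E) = A)).image w with hN
    have hNW : N ⊆ W := by
      intro v hv
      obtain ⟨E, hE, rfl⟩ := Finset.mem_image.1 hv
      exact (hw E (Finset.mem_filter.1 hE).1).2
    split_ifs with hAX
    · exact (Finset.card_le_card hNW).trans (Nat.le_add_left _ _)
    · by_contra hcon
      obtain ⟨W₀, hW₀N, hW₀⟩ := Finset.exists_subset_card_eq (s := N) (n := σ) (by omega)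
      refine hAX (Finset.mem_biUnion.2 ⟨W₀, Finset.mem_powersetCard.2 ⟨hW₀N.trans hNW, hW₀⟩,
        mem_commonLink.2 ⟨(Finset.mem_powersetCard.1 hA).2, fun v hv => ?_⟩⟩)
      obtain ⟨E, hE, rfl⟩ := Finset.mem_image.1 (hW₀N hv)
      rw [Finset.mem_filter] at hE
      rw [← hE.2, hins E hE.1]
      exact ⟨by simp, hGF E hE.1⟩
  calc G.card = ∑ A ∈ P, (G.filter (fun E => E.erase (w E) = A)).card :=
        Finset.card_eq_sum_card_fiberwise (fun E hE => by
          refine Finset.mem_coe.2 (Finset.mem_powersetCard.2 ⟨Finset.subset_univ _, ?_⟩)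
          rw [Finset.card_erase_of_mem (hw E hE).1, hF E (hGF E hE)])
    _ ≤ ∑ A ∈ P, ((σ - 1) + if A ∈ X then W.card else 0) := Finset.sum_le_sum hfib
    _ = (σ - 1) * n.choose (r - 1) + X.card * W.card := by
        rw [Finset.sum_add_distrib, Finset.sum_const, Finset.card_powersetCard, Finset.card_univ,
          Fintype.card_fin, ← Finset.sum_filter, Finset.filter_mem_eq_inter,
          Finset.inter_eq_right.2 hXP, Finset.sum_const, smul_eq_mul, smul_eq_mul,
          mul_comm (σ - 1)]
    _ ≤ (σ - 1) * n.choose (r - 1) + W.card ^ (σ + 1) * D := by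
        refine Nat.add_le_add_left ((Nat.mul_le_mul_right _ hX).trans (le_of_eq ?_)) _
        ring

/-! ### Families of bounded degree -/

/-- A consequence of the Kruskal–Katona theorem: a family of `t`-sets with at most `M ^ t` members
is at most of order `M ^ 2` times as large as its double shadow. -/
lemma card_le_mul_shadow {n t : ℕ} (ht : 2 ≤ t) (A : Finset (Finset (Fin n)))
    (hA : (A : Set (Finset (Fin n))).Sized t) (M : ℝ) (hM : 0 ≤ M) (hAM : (A.card : ℝ) ≤ M ^ t) :
    (A.card : ℝ) ≤ 2 * (t : ℝ) ^ 4 * M ^ 2 * ((Finset.shadow^[2] A).card : ℝ) := by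
  rcases A.eq_empty_or_nonempty with rfl | hne
  · simp only [Finset.card_empty, Nat.cast_zero]
    positivity
  have hAn : A.card ≤ n.choose t := by
    simpa using hA.card_le
  have htn : t ≤ n := by
    by_contra hcon
    rw [Nat.choose_eq_zero_of_lt (not_le.1 hcon)] at hAn
    exact absurd hne.card_pos (by omega)
  -- the largest `k ≤ n` with `k.choose t ≤ A.card`
  set k := Nat.findGreatest (fun k => k.choose t ≤ A.card) n with hk
  have hkn : k ≤ n := Nat.findGreatest_le n
  have htk : t ≤ k := Nat.le_findGreatest htn (by
    rw [Nat.choose_self]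
    exact hne.card_pos)
  have hkA : k.choose t ≤ A.card := Nat.findGreatest_spec (P := fun k => k.choose t ≤ A.card) htn
    (by
      rw [Nat.choose_self]
      exact hne.card_pos)
  have hAk : A.card ≤ (k + 1).choose t := by
    rcases hkn.eq_or_lt with h | h
    · rw [h]
      exact hAn.trans (Nat.choose_le_choose _ (Nat.le_succ n))
    · exact (not_le.1 (Nat.findGreatest_is_greatest (P := fun k => k.choose t ≤ A.card)
        (Nat.lt_succ_self k) h)).le
  have hy := Finset.kruskal_katona_lovasz_form ht htk hkn hA hkA
  clear_value k
  obtain ⟨u, rfl⟩ : ∃ u, t = u + 2 := ⟨t - 2, by omega⟩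
  rw [Nat.add_sub_cancel] at hy
  have h1 : A.card ≤ 2 * k ^ 2 * (Finset.shadow^[2] A).card := by
    have e1 := Nat.add_one_mul_choose_eq k (u + 1)
    have e2 := Nat.choose_succ_right_eq k u
    have e3 : (k + 1).choose (u + 2) ≤ (k + 1) * k.choose (u + 1) := by
      rw [e1]
      exact Nat.le_mul_of_pos_right _ (by omega)
    have e4 : k.choose (u + 1) ≤ k.choose u * k := by
      refine (Nat.le_mul_of_pos_right _ (Nat.succ_pos u)).trans (e2.le.trans ?_)
      exact Nat.mul_le_mul_left _ (Nat.sub_le _ _)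
    calc A.card ≤ (k + 1) * k.choose (u + 1) := hAk.trans e3
      _ ≤ (k + k) * (k.choose u * k) := Nat.mul_le_mul (by omega) e4
      _ = 2 * k ^ 2 * k.choose u := by ring
      _ ≤ _ := Nat.mul_le_mul_left _ hy
  set t := u + 2 with htu
  -- `k ≤ t * (k + 1 - t)`, so `k ^ t` is at most `(t ^ 2) ^ t * k.choose t`
  have h2 : k ^ t ≤ (t ^ 2) ^ t * A.card := by
    obtain ⟨d, rfl⟩ : ∃ d, k = t + d := ⟨k - t, by omega⟩
    have e1 : t + d ≤ t * (t + d + 1 - t) := by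
      rw [show t + d + 1 - t = d + 1 by omega]
      nlinarith
    have e2 := Nat.pow_sub_le_descFactorial (t + d) t
    rw [Nat.descFactorial_eq_factorial_mul_choose] at e2
    calc (t + d) ^ t ≤ (t * (t + d + 1 - t)) ^ t := Nat.pow_le_pow_left e1 _
      _ = t ^ t * (t + d + 1 - t) ^ t := mul_pow _ _ _
      _ ≤ t ^ t * (t.factorial * (t + d).choose t) := Nat.mul_le_mul_left _ e2
      _ ≤ t ^ t * (t ^ t * A.card) :=
        Nat.mul_le_mul_left _ (Nat.mul_le_mul (Nat.factorial_le_pow t) hkA)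
      _ = (t ^ 2) ^ t * A.card := by rw [← mul_assoc, ← mul_pow, sq]
  have h3 : (k : ℝ) ≤ (t : ℝ) ^ 2 * M := by
    have : (k : ℝ) ^ t ≤ ((t : ℝ) ^ 2 * M) ^ t := by
      rw [mul_pow]
      have h2' : (k : ℝ) ^ t ≤ ((t : ℝ) ^ 2) ^ t * A.card := by exact_mod_cast h2
      exact h2'.trans (mul_le_mul_of_nonneg_left hAM (by positivity))
    exact le_of_pow_le_pow_left₀ (by omega) (by positivity) this
  have h1' : (A.card : ℝ) ≤ 2 * (k : ℝ) ^ 2 * ((Finset.shadow^[2] A).card : ℝ) := by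
    exact_mod_cast h1
  refine h1'.trans (mul_le_mul_of_nonneg_right ?_ (by positivity))
  have : (k : ℝ) ^ 2 ≤ ((t : ℝ) ^ 2 * M) ^ 2 := pow_le_pow_left₀ (by positivity) h3 2
  nlinarith

/-- In a star-like family the double shadows of the links of different centres are disjoint, so
small degrees make the family small. -/
lemma Homog.card_le_of_star {n r s : ℕ} (hr : 3 ≤ r) {F : Finset (Finset (Fin n))}
    {χ : Fin n → Fin r} {J : Finset (Finset (Fin r))} (h : Homog s F χ J) (c : Fin r)
    (hc : ∀ K ∈ J, c ∉ K → K.card + 3 < r) (M : ℝ) (hM : 0 ≤ M)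
    (hdeg_le : ∀ v, (hdeg F v : ℝ) ≤ M ^ (r - 1)) :
    (F.card : ℝ) ≤ 2 * ((r - 1 : ℕ) : ℝ) ^ 4 * M ^ 2 * (n : ℝ) ^ (r - 3) := by
  let Z : Finset (Fin n) := univ.filter (fun v => χ v = c)
  let L : Fin n → Finset (Finset (Fin n)) := fun v =>
    (F.filter (fun E => v ∈ E)).image (fun E => E.erase v)
  have hL : ∀ v, (L v).card = hdeg F v := fun v => by
    refine Finset.card_image_of_injOn (fun E hE E' hE' heq => ?_)
    rw [Finset.mem_coe, Finset.mem_filter] at hE hE'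
    have heq : E.erase v = E'.erase v := heq
    rw [← Finset.insert_erase hE.2, ← Finset.insert_erase hE'.2, heq]
  have hsized : ∀ v, (L v : Set (Finset (Fin n))).Sized (r - 1) := fun v A hA => by
    obtain ⟨E, hE, rfl⟩ := Finset.mem_image.1 (Finset.mem_coe.1 hA)
    rw [Finset.mem_filter] at hE
    rw [Finset.card_erase_of_mem hE.2, (h.rainbow E hE.1).1]
  have hcount : F.card ≤ ∑ v ∈ Z, (L v).card := by
    have : F ⊆ Z.biUnion (fun v => F.filter (fun E => v ∈ E)) := by
      intro E hE
      obtain ⟨x, hx, hxc⟩ := h.rainbow.exists_color hE c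
      exact Finset.mem_biUnion.2 ⟨x, by simp [Z, hxc], Finset.mem_filter.2 ⟨hE, hx⟩⟩
    refine (Finset.card_le_card this).trans (Finset.card_biUnion_le.trans (le_of_eq ?_))
    exact Finset.sum_congr rfl (fun v _ => (hL v).symm)
  have hmem : ∀ v, ∀ A ∈ Finset.shadow^[2] (L v), A.card = r - 3 ∧ ∃ E ∈ F, v ∈ E ∧ A ⊆ E := by
    intro v A hA
    obtain ⟨B, hB, hAB, hcard⟩ := Finset.mem_shadow_iterate_iff_exists_mem_card_add.1 hA
    have hBc := hsized v hB
    obtain ⟨E, hE, rfl⟩ := Finset.mem_image.1 hB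
    rw [Finset.mem_filter] at hE
    exact ⟨by omega, E, hE.1, hE.2, hAB.trans (Finset.erase_subset _ _)⟩
  have hdisj : (Z : Set (Fin n)).PairwiseDisjoint (fun v => Finset.shadow^[2] (L v)) := by
    intro v hv v' hv' hne
    refine Finset.disjoint_left.2 (fun A hA hA' => ?_)
    obtain ⟨hAc, E, hE, hvE, hAE⟩ := hmem v A hA
    obtain ⟨-, E', hE', hvE', hAE'⟩ := hmem v' A hA'
    have hvc : χ v = c := by simpa [Z] using hv
    have hvc' : χ v' = c := by simpa [Z] using hv'
    have hEE' : E ≠ E' := by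
      rintro rfl
      exact hne ((h.rainbow E hE).2 hvE hvE' (hvc.trans hvc'.symm))
    have hlt := hc _ (h.inter E hE E' hE' hEE') (fun hcm => by
      obtain ⟨x, hx, hxc⟩ := Finset.mem_image.1 hcm
      rw [Finset.mem_inter] at hx
      have e1 := (h.rainbow E hE).2 hx.1 hvE (hxc.trans hvc.symm)
      have e2 := (h.rainbow E' hE').2 hx.2 hvE' (hxc.trans hvc'.symm)
      exact hne (e1.symm.trans e2))
    rw [Finset.card_image_of_injOn ((h.rainbow E hE).2.mono
      (Finset.coe_subset.2 Finset.inter_subset_left))] at hlt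
    have := Finset.card_le_card (Finset.subset_inter hAE hAE')
    omega
  have hsum : ∑ v ∈ Z, (Finset.shadow^[2] (L v)).card ≤ n ^ (r - 3) := by
    rw [← Finset.card_biUnion hdisj]
    have : Z.biUnion (fun v => Finset.shadow^[2] (L v)) ⊆ powersetCard (r - 3) univ := by
      intro A hA
      obtain ⟨v, -, hA⟩ := Finset.mem_biUnion.1 hA
      exact Finset.mem_powersetCard.2 ⟨Finset.subset_univ _, (hmem v A hA).1⟩
    refine (Finset.card_le_card this).trans ?_
    rw [Finset.card_powersetCard, Finset.card_univ, Fintype.card_fin]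
    exact Nat.choose_le_pow _ _
  have hcount' : (F.card : ℝ) ≤ ∑ v ∈ Z, ((L v).card : ℝ) := by exact_mod_cast hcount
  have hsum' : ∑ v ∈ Z, ((Finset.shadow^[2] (L v)).card : ℝ) ≤ (n : ℝ) ^ (r - 3) := by
    exact_mod_cast hsum
  refine hcount'.trans ?_
  calc ∑ v ∈ Z, ((L v).card : ℝ)
      ≤ ∑ v ∈ Z, 2 * ((r - 1 : ℕ) : ℝ) ^ 4 * M ^ 2 * ((Finset.shadow^[2] (L v)).card : ℝ) :=
        Finset.sum_le_sum (fun v _ => card_le_mul_shadow (by omega) (L v) (hsized v) M hM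
          (by rw [hL]; exact hdeg_le v))
    _ = 2 * ((r - 1 : ℕ) : ℝ) ^ 4 * M ^ 2 * ∑ v ∈ Z, ((Finset.shadow^[2] (L v)).card : ℝ) := by
        rw [Finset.mul_sum]
    _ ≤ _ := mul_le_mul_of_nonneg_left hsum' (by positivity)

/-! ### Bounds for families without a copy of `H` -/

lemma ContainsCopy.mono {α V : Type*} [DecidableEq α] [DecidableEq V] {F G : Finset (Finset V)}
    {H : Finset (Finset α)} (h : ContainsCopy F H) (hFG : F ⊆ G) : ContainsCopy G H := by
  obtain ⟨f, hf, hfF⟩ := h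
  exact ⟨f, hf, fun E hE => hFG (hfF E hE)⟩

/-- A family without a copy of `H` contains a proportional homogeneous subfamily that is small or
star-like. -/
lemma exists_core {α : Type*} [DecidableEq α] {r : ℕ} (hr : 4 ≤ r) {H : Finset (Finset α)}
    (M : TreeModel r H) :
    ∃ C : ℕ, ∀ (n : ℕ) (F : Finset (Finset (Fin n))), (∀ E ∈ F, E.card = r) →
      ¬ ContainsCopy F H → ∃ F' ⊆ F, F.card ≤ C * F'.card ∧ (F'.card ≤ n ^ (r - 2) ∨
        F'.Nonempty ∧ ∃ (χ : Fin n → Fin r) (J : Finset (Finset (Fin r))) (c : Fin r),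
          Homog (2 * r + (prev M.E M.m).card + 1) F' χ J ∧
          (∀ K : Finset (Fin r), K ≠ univ → c ∈ K → K ∈ J) ∧
          (∀ K ∈ J, c ∉ K → K.card + 3 < r)) := by
  obtain ⟨C, -, hC⟩ := exists_homog r (2 * r + (prev M.E M.m).card + 1) (by omega) (by omega)
  refine ⟨C, fun n F hF hfree => ?_⟩
  obtain ⟨F', hF', χ, J, hle, h⟩ := hC n F hF
  refine ⟨F', hF', hle, ?_⟩
  rcases F'.eq_empty_or_nonempty with h0 | hne
  · left
    simp [h0]
  rcases h.trichotomy (by omega) hne hr (fun a b hab => by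
    by_contra hcon
    push Not at hcon
    exact hfree ((M.copy_of_free h hne (by omega) a b hab hcon).mono hF')) with h1 | ⟨c, h1, h2⟩
  · exact Or.inl h1
  · exact Or.inr ⟨hne, χ, J, c, h, h1, h2⟩

/-- In the star-like case the colours other than the centre determine an edge. -/
lemma exists_bound_crude {α : Type*} [DecidableEq α] {r : ℕ} (hr : 4 ≤ r) {H : Finset (Finset α)}
    (M : TreeModel r H) :
    ∃ C : ℕ, ∀ (n : ℕ) (F : Finset (Finset (Fin n))), (∀ E ∈ F, E.card = r) →
      ¬ ContainsCopy F H → F.card ≤ C * n ^ (r - 1) := by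
  obtain ⟨C, hC⟩ := exists_core hr M
  refine ⟨C, fun n F hF hfree => ?_⟩
  obtain ⟨F', -, hle, h | ⟨-, χ, J, c, h, -, h2⟩⟩ := hC n F hF hfree
  · refine hle.trans (Nat.mul_le_mul_left _ (h.trans ?_))
    rcases Nat.eq_zero_or_pos n with rfl | hn
    · rw [Nat.zero_pow (by omega)]
      exact Nat.zero_le _
    · exact Nat.pow_le_pow_right hn (by omega)
  · refine hle.trans (Nat.mul_le_mul_left _ ?_)
    have := h.card_le_of_uncovered (univ.erase c) (fun L hL hsub => by
      by_cases hcL : c ∈ L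
      · refine h.univ_notMem ?_
        rwa [← Finset.eq_univ_of_forall (s := L) (fun d => by
          by_cases hd : d = c
          · rwa [hd]
          · exact hsub (by simp [hd]))]
      · have h3 := h2 L hL hcL
        have h4 := Finset.card_le_card hsub
        rw [Finset.card_erase_of_mem (Finset.mem_univ _), Finset.card_univ,
          Fintype.card_fin] at h4
        omega)
    rwa [Finset.card_erase_of_mem (Finset.mem_univ _), Finset.card_univ, Fintype.card_fin] at this

lemma exists_bound_light {α : Type*} [DecidableEq α] {r : ℕ} (hr : 4 ≤ r) {H : Finset (Finset α)}
    (M : TreeModel r H) :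
    ∃ C : ℝ, 0 ≤ C ∧ ∀ (n : ℕ) (F : Finset (Finset (Fin n))), (∀ E ∈ F, E.card = r) →
      ¬ ContainsCopy F H → ∀ d : ℝ, 0 ≤ d → (∀ v, (hdeg F v : ℝ) ≤ d ^ (r - 1)) →
        (F.card : ℝ) ≤ C * ((n : ℝ) ^ (r - 2) + d ^ 2 * (n : ℝ) ^ (r - 3)) := by
  obtain ⟨C, hC⟩ := exists_core hr M
  refine ⟨C * (1 + 2 * ((r - 1 : ℕ) : ℝ) ^ 4), by positivity, fun n F hF hfree d hd hdeg_le => ?_⟩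
  obtain ⟨F', hsub, hle, h⟩ := hC n F hF hfree
  have hle' : (F.card : ℝ) ≤ C * F'.card := by exact_mod_cast hle
  rw [mul_assoc]
  refine hle'.trans (mul_le_mul_of_nonneg_left ?_ (by positivity))
  have e1 : (0 : ℝ) ≤ (n : ℝ) ^ (r - 2) := by positivity
  have e2 : (0 : ℝ) ≤ d ^ 2 * (n : ℝ) ^ (r - 3) := by positivity
  have e3 : (0 : ℝ) ≤ 2 * ((r - 1 : ℕ) : ℝ) ^ 4 := by positivity
  rcases h with h | ⟨-, χ, J, c, h, -, h2⟩
  · have h' : (F'.card : ℝ) ≤ (n : ℝ) ^ (r - 2) := by exact_mod_cast h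
    nlinarith [mul_nonneg e3 e1, mul_nonneg e3 e2]
  · have h' := h.card_le_of_star (by omega) c h2 d hd (fun v => le_trans (by
      have : hdeg F' v ≤ hdeg F v := Finset.card_le_card (Finset.filter_subset_filter _ hsub)
      exact_mod_cast this) (hdeg_le v))
    nlinarith [mul_nonneg e3 e1, mul_nonneg e3 e2]

lemma exists_bound_of_common_vertex {α : Type*} [DecidableEq α] {r : ℕ} (hr : 4 ≤ r)
    {H : Finset (Finset α)} (M : TreeModel r H) (x₀ : α) (hx₀ : ∀ A ∈ H, x₀ ∈ A) :
    ∃ C : ℕ, ∀ (n : ℕ) (F : Finset (Finset (Fin n))), (∀ E ∈ F, E.card = r) →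
      ¬ ContainsCopy F H → F.card ≤ C * n ^ (r - 2) := by
  obtain ⟨C, hC⟩ := exists_core hr M
  refine ⟨C, fun n F hF hfree => ?_⟩
  obtain ⟨F', hsub, hle, h | ⟨hne, χ, J, c, h, h1, -⟩⟩ := hC n F hF hfree
  · exact hle.trans (Nat.mul_le_mul_left _ h)
  · exact absurd ((M.copy_of_star h hne (by omega) c h1 x₀ hx₀).mono hsub) hfree

lemma exNum_le {α : Type*} [DecidableEq α] {n r : ℕ} {H : Finset (Finset α)} {b : ℝ}
    (hb : 0 ≤ b) (h : ∀ F : Finset (Finset (Fin n)), (∀ E ∈ F, E.card = r) →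
      ¬ ContainsCopy F H → (F.card : ℝ) ≤ b) : (exNum n r H : ℝ) ≤ b := by
  have : exNum n r H ≤ ⌊b⌋₊ := by
    refine csSup_le' ?_
    rintro N ⟨F, hF, hfree, rfl⟩
    exact Nat.le_floor (h F hF hfree)
  exact (Nat.cast_le.2 this).trans (Nat.floor_le hb)

lemma sum_hdeg {n r : ℕ} (F : Finset (Finset (Fin n))) (hF : ∀ E ∈ F, E.card = r) :
    ∑ v, hdeg F v = r * F.card := by
  have h1 : ∀ v, hdeg F v = ∑ E ∈ F, if v ∈ E then 1 else 0 := fun v => by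
    simp [hdeg]
  simp_rw [h1]
  rw [Finset.sum_comm]
  rw [Finset.sum_congr rfl (g := fun _ => r) (fun E hE => by simp [hF E hE])]
  simp [mul_comm]

/-- Vertices of degree above `n ^ ((r - 1) * (1 - b / 2))` are heavy. There are few of them, which
controls the edges meeting them, and the remaining edges form a family of bounded degree. -/
lemma exists_bound_main {α : Type*} [DecidableEq α] {r : ℕ} (hr : 4 ≤ r) {H : Finset (Finset α)}
    (hH : ∀ A ∈ H, A.card = r) (M : TreeModel r H) {S : Finset α} (hS : IsCrossCut H S)
    (hS1 : 1 ≤ S.card) (b : ℝ) (hb0 : 0 ≤ b)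
    (hb : b * (((r : ℝ) - 2) * ((S.card : ℝ) + 1) + 1) = 1) :
    ∃ C : ℝ, 0 < C ∧ ∀ (n : ℕ) (F : Finset (Finset (Fin n))), (∀ E ∈ F, E.card = r) →
      ¬ ContainsCopy F H → (F.card : ℝ) ≤
        ((S.card : ℝ) - 1) * (n.choose (r - 1)) + C * (n : ℝ) ^ ((r : ℝ) - 1 - b) := by
  obtain ⟨C₁, hC₁⟩ := exists_commonLink_bound (by omega) hH M hS
  obtain ⟨C₂, hC₂⟩ := exists_bound_crude hr M
  obtain ⟨C₃, hC₃0, hC₃⟩ := exists_bound_light hr M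
  set σ := S.card with hσ
  have hr' : (4 : ℝ) ≤ r := by exact_mod_cast hr
  have hσ' : (1 : ℝ) ≤ σ := by exact_mod_cast hS1
  refine ⟨(r * C₂) ^ (σ + 1) * C₁ + 2 * C₃ + 1, by positivity, fun n F hF hfree => ?_⟩
  rcases Nat.eq_zero_or_pos n with rfl | hn
  · have := hC₂ 0 F hF hfree
    rw [Nat.zero_pow (by omega), Nat.mul_zero, Nat.le_zero] at this
    rw [this, Nat.cast_zero]
    have h1 : (0 : ℝ) ≤ (σ : ℝ) - 1 := by linarith
    positivity
  have hx1 : (1 : ℝ) ≤ n := by exact_mod_cast hn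
  have hx0 : (0 : ℝ) < n := by linarith
  set x : ℝ := (n : ℝ) with hx
  have hb1 : b ≤ 1 := by nlinarith [mul_nonneg hb0 (by nlinarith : (0 : ℝ) ≤
    ((r : ℝ) - 2) * ((σ : ℝ) + 1))]
  set d : ℝ := x ^ (1 - b / 2) with hd
  have hd0 : 0 < d := Real.rpow_pos_of_pos hx0 _
  have hr1 : ((r - 1 : ℕ) : ℝ) = (r : ℝ) - 1 := by
    rw [Nat.cast_sub (by omega)]
    simp
  have hr2 : ((r - 2 : ℕ) : ℝ) = (r : ℝ) - 2 := by
    rw [Nat.cast_sub (by omega)]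
    simp
  have hr3 : ((r - 3 : ℕ) : ℝ) = (r : ℝ) - 3 := by
    rw [Nat.cast_sub (by omega)]
    simp
  have hdpow : d ^ (r - 1) = x ^ (((r : ℝ) - 1) * (1 - b / 2)) := by
    rw [hd, ← Real.rpow_natCast, ← Real.rpow_mul hx0.le, hr1, mul_comm]
  let W : Finset (Fin n) := univ.filter (fun v => d ^ (r - 1) < (hdeg F v : ℝ))
  -- there are few heavy vertices
  have hW : (W.card : ℝ) ≤ r * C₂ * x ^ (((r : ℝ) - 1) * (b / 2)) := by
    have h1 : (W.card : ℝ) * d ^ (r - 1) ≤ r * (C₂ * x ^ (r - 1)) := by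
      calc (W.card : ℝ) * d ^ (r - 1) = ∑ v ∈ W, d ^ (r - 1) := by simp
        _ ≤ ∑ v ∈ W, (hdeg F v : ℝ) :=
          Finset.sum_le_sum (fun v hv => (Finset.mem_filter.1 hv).2.le)
        _ ≤ ∑ v, (hdeg F v : ℝ) :=
          Finset.sum_le_sum_of_subset_of_nonneg (Finset.subset_univ _) (fun _ _ _ => by positivity)
        _ = r * F.card := by
          rw [← Nat.cast_sum, sum_hdeg F hF, Nat.cast_mul]
        _ ≤ r * (C₂ * x ^ (r - 1)) := by
          refine mul_le_mul_of_nonneg_left ?_ (by positivity)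
          have := hC₂ n F hF hfree
          rw [hx]
          exact_mod_cast this
    have h2 : (r : ℝ) * (C₂ * x ^ (r - 1)) =
        r * C₂ * x ^ (((r : ℝ) - 1) * (b / 2)) * d ^ (r - 1) := by
      rw [hdpow, mul_assoc (_ * _), ← Real.rpow_add hx0, ← Real.rpow_natCast, hr1, mul_assoc]
      ring_nf
    rw [h2] at h1
    exact le_of_mul_le_mul_right h1 (by positivity)
  have hheavy := card_meeting_le hS1 F hF W _ (hC₁ n F hfree)
  have hheavy' : ((F.filter (fun E => ¬ Disjoint E W)).card : ℝ) ≤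
      ((σ : ℝ) - 1) * n.choose (r - 1) + (r * C₂) ^ (σ + 1) * C₁ * x ^ ((r : ℝ) - 1 - b) := by
    have h1 : ((F.filter (fun E => ¬ Disjoint E W)).card : ℝ) ≤
        ((σ - 1 : ℕ) : ℝ) * n.choose (r - 1) + (W.card : ℝ) ^ (σ + 1) * (C₁ * x ^ (r - 2)) := by
      rw [hx]
      exact_mod_cast hheavy
    rw [Nat.cast_sub hS1, Nat.cast_one] at h1
    refine h1.trans (add_le_add_right ?_ _)
    calc (W.card : ℝ) ^ (σ + 1) * (C₁ * x ^ (r - 2))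
        ≤ (r * C₂ * x ^ (((r : ℝ) - 1) * (b / 2))) ^ (σ + 1) * (C₁ * x ^ (r - 2)) :=
          mul_le_mul_of_nonneg_right (pow_le_pow_left₀ (by positivity) hW _) (by positivity)
      _ = (r * C₂) ^ (σ + 1) * C₁ *
          x ^ (((r : ℝ) - 1) * (b / 2) * ((σ : ℝ) + 1) + ((r : ℝ) - 2)) := by
          rw [mul_pow, Real.rpow_add hx0, Real.rpow_mul hx0.le _ ((σ : ℝ) + 1),
            ← Real.rpow_natCast x (r - 2), hr2, ← Nat.cast_add_one, Real.rpow_natCast]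
          ring
      _ ≤ _ := by
          refine mul_le_mul_of_nonneg_left (Real.rpow_le_rpow_of_exponent_le hx1 ?_)
            (by positivity)
          -- uses `(r - 1) / 2 ≤ r - 2`
          nlinarith [mul_nonneg (mul_nonneg hb0 (by linarith : (0 : ℝ) ≤ (σ : ℝ) + 1))
            (by linarith : (0 : ℝ) ≤ (r : ℝ) - 3)]
  -- edges avoiding the heavy vertices
  have hlight : ((F.filter (fun E => Disjoint E W)).card : ℝ) ≤
      2 * C₃ * x ^ ((r : ℝ) - 1 - b) := by
    have h1 := hC₃ n (F.filter (fun E => Disjoint E W))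
      (fun E hE => hF E (Finset.mem_filter.1 hE).1)
      (fun hcopy => hfree (hcopy.mono (Finset.filter_subset _ _))) d hd0.le (fun v => by
        by_cases hv : v ∈ W
        · have : hdeg (F.filter (fun E => Disjoint E W)) v = 0 := by
            rw [hdeg, Finset.card_eq_zero, Finset.filter_eq_empty_iff]
            intro E hE hvE
            exact Finset.disjoint_left.1 (Finset.mem_filter.1 hE).2 hvE hv
          rw [this, Nat.cast_zero]
          positivity
        · have h2 : hdeg (F.filter (fun E => Disjoint E W)) v ≤ hdeg F v :=
            Finset.card_le_card (Finset.filter_subset_filter _ (Finset.filter_subset _ _))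
          have h3 : (hdeg F v : ℝ) ≤ d ^ (r - 1) := by
            by_contra hcon
            exact hv (Finset.mem_filter.2 ⟨Finset.mem_univ _, not_le.1 hcon⟩)
          exact le_trans (by exact_mod_cast h2) h3)
    have h4 : x ^ (r - 2) ≤ x ^ ((r : ℝ) - 1 - b) := by
      rw [← Real.rpow_natCast, hr2]
      exact Real.rpow_le_rpow_of_exponent_le hx1 (by linarith)
    have h5 : d ^ 2 * x ^ (r - 3) = x ^ ((r : ℝ) - 1 - b) := by
      rw [hd, ← Real.rpow_natCast, ← Real.rpow_mul hx0.le, ← Real.rpow_natCast x (r - 3), hr3,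
        ← Real.rpow_add hx0]
      congr 1
      push_cast
      ring
    refine h1.trans ?_
    rw [h5]
    nlinarith [mul_le_mul_of_nonneg_left h4 hC₃0]
  have hsplit : (F.card : ℝ) = ((F.filter (fun E => Disjoint E W)).card : ℝ) +
      ((F.filter (fun E => ¬ Disjoint E W)).card : ℝ) := by
    rw [← Nat.cast_add, Finset.card_filter_add_card_filter_not]
  have hpos : 0 < x ^ ((r : ℝ) - 1 - b) := Real.rpow_pos_of_pos hx0 _
  rw [hsplit]
  nlinarith

/-- Asymptotic upper bound (Theorem: Asymptotic). If `r ≥ 4` and `H` is embeddable in a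
`2`-reducible `r`-tree with cross-cut number `σ`, then with `β = 1/((r-2)(σ+1)+1)`:
for `σ ≥ 2`, `ex(n,H) ≤ (σ-1)·C(n,r-1) + C·n^(r-1-β)`, and for `σ = 1`,
`ex(n,H) ≤ C·n^(r-2)`, for a constant `C` depending only on `H` and `r`. -/
theorem exNum_upper_asymptotic {α : Type*} [DecidableEq α]
    (r σ : ℕ) (hr : 4 ≤ r)
    (H : Finset (Finset α)) (hH : ∀ E ∈ H, E.card = r)
    (hemb : ∃ T : Finset (Finset ℕ), IsRTree r T ∧ Reducible 2 T ∧ ContainsCopy T H)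
    (hcc : ∃ S : Finset α, IsCrossCut H S)
    (hσ : crossCutNum H = σ) :
    (2 ≤ σ → ∃ C : ℝ, 0 < C ∧ ∀ n : ℕ,
      (exNum n r H : ℝ) ≤ ((σ : ℝ) - 1) * (Nat.choose n (r - 1)) +
        C * (n : ℝ) ^ ((r : ℝ) - 1 - 1 / (((r : ℝ) - 2) * ((σ : ℝ) + 1) + 1))) ∧
    (σ = 1 → ∃ C : ℝ, 0 < C ∧ ∀ n : ℕ,
      (exNum n r H : ℝ) ≤ C * (n : ℝ) ^ (r - 2 : ℕ)) := by
  obtain ⟨M⟩ := exists_treeModel r H hemb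
  obtain ⟨S, hS, hSσ⟩ : ∃ S : Finset α, IsCrossCut H S ∧ S.card = σ := by
    have : crossCutNum H ∈ {k | ∃ S : Finset α, IsCrossCut H S ∧ S.card = k} :=
      Nat.sInf_mem ⟨hcc.choose.card, hcc.choose, hcc.choose_spec, rfl⟩
    rw [hσ] at this
    exact this
  constructor
  · intro h2
    have hr' : (4 : ℝ) ≤ r := by exact_mod_cast hr
    have hσ' : (2 : ℝ) ≤ σ := by exact_mod_cast h2
    have hpos : 0 < ((r : ℝ) - 2) * ((σ : ℝ) + 1) + 1 := by nlinarith
    obtain ⟨C, hC, hbound⟩ := exists_bound_main hr hH M hS (by omega)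
      (1 / (((r : ℝ) - 2) * ((σ : ℝ) + 1) + 1)) (by positivity)
      (by rw [hSσ]; exact one_div_mul_cancel hpos.ne')
    rw [hSσ] at hbound
    refine ⟨C, hC, fun n => exNum_le ?_ (hbound n)⟩
    have : (0 : ℝ) ≤ (σ : ℝ) - 1 := by linarith
    positivity
  · intro h1
    obtain ⟨x₀, rfl⟩ := Finset.card_eq_one.1 (hSσ.trans h1)
    obtain ⟨C, hbound⟩ := exists_bound_of_common_vertex hr M x₀ (fun A hA => by
      by_contra hx
      have := hS A hA
      rw [Finset.inter_singleton_of_notMem hx] at this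
      simp at this)
    refine ⟨C + 1, by positivity, fun n => exNum_le (by positivity) (fun F hF hfree => ?_)⟩
    have h := hbound n F hF hfree
    have h' : (F.card : ℝ) ≤ C * (n : ℝ) ^ (r - 2) := by exact_mod_cast h
    have : (0 : ℝ) ≤ (n : ℝ) ^ (r - 2) := by positivity
    linarith

end
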